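/- arXiv:1912.05562 — 8 statements merged into one kernel-verified Lean document; each statement's English description precedes it below -/
import Mathlib

section
/- Vector-valued Taylor remainder theorem (Proposition, based on the Ważewski–McLeod mean value theorem): Let E be a real normed vector space of finite dimension m ≥ 1, let n ∈ ℕ, and let F : ℝ → E be a function such that F and its derivatives F⁽¹⁾,…,F⁽ⁿ⁾ exist and are continuous on [0,1], and F⁽ⁿ⁺¹⁾ exists on (0,1). Then there exist points t₁,…,t_m ∈ (0,1) and nonnegative reals λ₁,…,λ_m with Σ_{l=1}^m λ_l = 1 such that F(1) − Σ_{k=0}^n F⁽ᵏ⁾(0)/k! = Σ_{l=1}^m λ_l · ((1−t_l)ⁿ/n!) · F⁽ⁿ⁺¹⁾(t_l). -/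
section

open Set Filter Topology

namespace VVTaylor

/-- If the derivatives have, at every point of `[a,b]`, a strict argmax `c t`, then `c` is
constant on `[a,b]`. -/
theorem argmax_const {ι : Type*} [Fintype ι] [TopologicalSpace ι] [DiscreteTopology ι]
    {a b : ℝ} (hab : a < b) (g g' : ι → ℝ → ℝ) (c : ℝ → ι)
    (hg : ∀ j, ∀ t ∈ Icc a b, HasDerivAt (g j) (g' j t) t)
    (hc : ∀ t ∈ Icc a b, ∀ j, j ≠ c t → g' j t < g' (c t) t) :
    ∀ x ∈ Icc a b, ∀ y ∈ Icc a b, c x = c y := by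
  -- Darboux step
  have hD : ∀ S : Set ℝ, Convex ℝ S → S ⊆ Icc a b → ∀ p ∈ S, ∀ s ∈ S, ∀ k,
      (∀ x ∈ S, x ≠ p → c x = k) → s ≠ p → c p = k := by
    intro S hS hSI p hp s hs k hk hsp
    by_contra hne
    have h1 := hasDerivWithinAt_forall_lt_or_forall_gt_of_forall_ne (s := S)
      (f := fun x => g k x - g (c p) x) (f' := fun x => g' k x - g' (c p) x) hS
      (fun x hx => ((hg k x (hSI hx)).sub (hg (c p) x (hSI hx))).hasDerivWithinAt) (m := 0)
      (by
        intro x hx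
        by_cases hxp : x = p
        · subst hxp
          have := hc x (hSI hx) k (Ne.symm hne)
          linarith
        · have h2 := hk x hx hxp
          have := hc x (hSI hx) (c p) (by rw [h2]; exact hne)
          rw [h2] at this
          linarith)
    have h3 := hc p (hSI hp) k (Ne.symm hne)
    have h4 := hk s hs hsp
    have h5 := hc s (hSI hs) (c p) (by rw [h4]; exact hne)
    rw [h4] at h5
    rcases h1 with h | h
    · have := h s hs; linarith
    · have := h p hp; linarith
  set P : Set ℝ := {t ∈ Icc a b | ¬ ∀ᶠ s in 𝓝[Icc a b] t, c s = c t} with hP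
  have hPsub : P ⊆ Icc a b := fun t ht => ht.1
  have hcont : ∀ t ∈ Icc a b, t ∉ P → ContinuousWithinAt c (Icc a b) t := by
    intro t ht htP
    have : ∀ᶠ s in 𝓝[Icc a b] t, c s = c t := by
      by_contra h
      exact htP ⟨ht, h⟩
    unfold ContinuousWithinAt
    rw [nhds_discrete]
    simpa using this
  have hPclosed : IsClosed P := by
    rw [← isOpen_compl_iff, isOpen_iff_mem_nhds]
    intro t ht
    by_cases htI : t ∈ Icc a b
    · have h1 : ∀ᶠ s in 𝓝[Icc a b] t, c s = c t := by
        by_contra h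
        exact ht ⟨htI, h⟩
      have h2 := eventually_eventually_nhdsWithin.2 h1
      rw [eventually_nhdsWithin_iff] at h2
      filter_upwards [h2] with s hs hsP
      have h3 := hs hsP.1
      have h4 := h3.self_of_nhdsWithin hsP.1
      exact hsP.2 (h3.mono fun x hx => by rw [hx, h4])
    · filter_upwards [isClosed_Icc.isOpen_compl.mem_nhds htI] with s hs hsP
      exact hs hsP.1
  have hPempty : P = ∅ := by
    by_contra hPne
    obtain ⟨p0, hp0⟩ := nonempty_iff_ne_empty.2 hPne
    have : Nonempty P := ⟨⟨p0, hp0⟩⟩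
    have : CompleteSpace P := hPclosed.completeSpace_coe
    have hgc : ∀ j, Continuous (fun t : P => g j t) := by
      intro j
      refine continuous_iff_continuousAt.2 fun t => ?_
      exact (hg j t (hPsub t.2)).continuousAt.comp continuous_subtype_val.continuousAt
    let K : ι × ℕ → Set P := fun q => ⋂ s : Icc a b, ⋂ j : ι,
      {t : P | (1 : ℝ) / (q.2 + 1) ≤ |(s : ℝ) - t|} ∪
      {t : P | 0 ≤ ((s : ℝ) - t) * ((g q.1 s - g j s) - (g q.1 t - g j t))}
    have hKc : ∀ q, IsClosed (K q) := by
      intro q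
      refine isClosed_iInter fun s => isClosed_iInter fun j => IsClosed.union ?_ ?_
      · exact isClosed_le continuous_const (by fun_prop)
      · have h1 := hgc q.1
        have h2 := hgc j
        have h3 : Continuous (fun t : P => (s : ℝ) - t) := by fun_prop
        exact isClosed_le continuous_const
          (h3.mul (continuous_const.sub (h1.sub h2)))
    -- local sign of increments
    have hsign : ∀ i j, ∀ t ∈ Icc a b, g' j t < g' i t →
        ∀ᶠ s in 𝓝[≠] t, 0 < (s - t) * ((g i s - g j s) - (g i t - g j t)) := by
      intro i j t ht hlt
      have h1 := (hasDerivAt_iff_tendsto_slope.1 ((hg i t ht).sub (hg j t ht)))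
      have h2 := h1.eventually (lt_mem_nhds (sub_pos.2 hlt))
      filter_upwards [h2, self_mem_nhdsWithin] with s hs hst
      have hst' : s - t ≠ 0 := sub_ne_zero.2 hst
      rw [slope_def_field] at hs
      have h3 : 0 < (s - t) ^ 2 := by positivity
      have h4 := mul_pos h3 hs
      have h5 : (s - t) ^ 2 * (((g i - g j) s - (g i - g j) t) / (s - t))
          = (s - t) * ((g i s - g j s) - (g i t - g j t)) := by
        simp only [Pi.sub_apply]; field_simp
      rwa [h5] at h4
    have hKU : ⋃ q, K q = univ := by
      refine eq_univ_of_forall fun t => ?_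
      have h1 : ∀ᶠ s in 𝓝[≠] (t : ℝ), ∀ j,
          0 ≤ (s - t) * ((g (c t) s - g j s) - (g (c t) t - g j t)) := by
        rw [eventually_all]
        intro j
        by_cases hj : j = c t
        · subst hj; simp
        · exact (hsign _ _ _ (hPsub t.2) (hc t (hPsub t.2) j hj)).mono fun s hs => hs.le
      rw [eventually_nhdsWithin_iff, Metric.eventually_nhds_iff] at h1
      obtain ⟨ε, hε, h1⟩ := h1
      obtain ⟨n, hn⟩ := exists_nat_one_div_lt hε
      refine mem_iUnion.2 ⟨(c t, n), mem_iInter.2 fun s => mem_iInter.2 fun j => ?_⟩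
      by_cases hs : (1 : ℝ) / (n + 1) ≤ |(s : ℝ) - t|
      · exact Or.inl hs
      · refine Or.inr ?_
        push Not at hs
        by_cases hst : (s : ℝ) = t
        · simp [hst]
        · exact h1 (y := (s : ℝ)) (by rw [Real.dist_eq]; linarith) hst j
    obtain ⟨⟨i, n⟩, t0, ht0⟩ := nonempty_interior_of_iUnion_of_closed hKc hKU
    rw [mem_interior_iff_mem_nhds, Metric.mem_nhds_iff] at ht0
    obtain ⟨ε, hε, hball⟩ := ht0
    have hPi : ∀ t ∈ P, |t - t0| < ε → c t = i := by
      intro t ht hte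
      have h1 : (⟨t, ht⟩ : P) ∈ K (i, n) := hball (by
        rw [Metric.mem_ball, Subtype.dist_eq, Real.dist_eq]; exact hte)
      by_contra hne
      have h2 := hsign (c t) i t (hPsub ht) (hc t (hPsub ht) i (Ne.symm hne))
      have h3 : ∀ᶠ s in 𝓝 t, |s - t| < 1 / (n + 1) := by
        have := Metric.ball_mem_nhds t (show (0 : ℝ) < 1 / (n + 1) by positivity)
        filter_upwards [this] with s hs
        rwa [Metric.mem_ball, Real.dist_eq] at hs
      have hNB : (𝓝[Icc a b \ {t}] t).NeBot := by
        rw [← accPt_principal_iff_nhdsWithin]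
        exact uniqueDiffWithinAt_iff_accPt.1 (uniqueDiffOn_Icc hab t (hPsub ht))
      obtain ⟨s, ⟨hs1, hs2⟩, hs3, hs4⟩ := (((h2.filter_mono
        (nhdsWithin_mono t (fun x hx => hx.2 : Icc a b \ {t} ⊆ {t}ᶜ))).and
        (h3.filter_mono nhdsWithin_le_nhds)).and
        (self_mem_nhdsWithin : Icc a b \ {t} ∈ 𝓝[Icc a b \ {t}] t)).exists
      have h5 := mem_iInter.1 (mem_iInter.1 h1 ⟨s, hs3⟩) (c t)
      rcases h5 with h5 | h5
      · simp only [mem_ofPred_eq] at h5; linarith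
      · simp only [mem_ofPred_eq] at h5; nlinarith
    have hall : ∀ s ∈ Icc a b, |s - t0| < ε → c s = i := by
      intro s hs hse
      by_cases hsP : s ∈ P
      · exact hPi s hsP hse
      have hcomp : IsCompact (P ∩ uIcc (t0 : ℝ) s) := isCompact_uIcc.inter_left hPclosed
      obtain ⟨p, ⟨hpP, hpI⟩, hpmin⟩ := hcomp.exists_isMinOn ⟨t0, t0.2, left_mem_uIcc⟩
        (f := fun x => |x - s|) (by fun_prop)
      have hps : s ≠ p := fun h => hsP (h ▸ hpP)
      have hsubI : uIcc p s ⊆ Icc a b := ordConnected_Icc.uIcc_subset (hPsub hpP) hs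
      have hpε : |p - t0| < ε := by
        have : |p - t0| ≤ |s - t0| := abs_sub_left_of_mem_uIcc hpI
        linarith
      have hsub2 : uIcc p s ⊆ uIcc (t0 : ℝ) s := uIcc_subset_uIcc hpI right_mem_uIcc
      have hout : ∀ x ∈ uIcc p s, x ≠ p → x ∉ P := by
        intro x hx hxp hxP
        have h1 := hpmin ⟨hxP, hsub2 hx⟩
        simp only [mem_ofPred_eq] at h1
        rcases le_total p s with h | h
        · rw [uIcc_of_le h] at hx
          rw [abs_of_nonpos (by linarith), abs_of_nonpos (by linarith [hx.2])] at h1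
          exact hxp (le_antisymm (by linarith) hx.1)
        · rw [uIcc_of_ge h] at hx
          rw [abs_of_nonneg (by linarith), abs_of_nonneg (by linarith [hx.1])] at h1
          exact hxp (le_antisymm hx.2 (by linarith))
      have hpre : IsPreconnected (uIcc p s \ {p}) := by
        rcases le_total p s with h | h
        · rw [uIcc_of_le h, Icc_sdiff_left]; exact isPreconnected_Ioc
        · rw [uIcc_of_ge h, Icc_sdiff_right]; exact isPreconnected_Ico
      have hconst : ∀ x ∈ uIcc p s, x ≠ p → c x = c s := by
        intro x hx hxp
        refine hpre.constant (f := c) ?_ ⟨hx, hxp⟩ ⟨right_mem_uIcc, hps⟩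
        intro y hy
        exact (hcont y (hsubI hy.1) (hout y hy.1 hy.2)).mono fun z hz => hsubI hz.1
      have h1 := hD (uIcc p s) (convex_uIcc p s) hsubI p left_mem_uIcc s right_mem_uIcc (c s)
        hconst hps
      rw [← h1]
      exact hPi p hpP hpε
    refine t0.2.2 ?_
    have hb : ∀ᶠ s in 𝓝[Icc a b] (t0 : ℝ), |s - (t0 : ℝ)| < ε := by
      refine nhdsWithin_le_nhds ?_
      filter_upwards [Metric.ball_mem_nhds (t0 : ℝ) hε] with s hs
      rwa [Metric.mem_ball, Real.dist_eq] at hs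
    filter_upwards [hb, self_mem_nhdsWithin] with s hs hsI
    rw [hall s hsI hs, hPi t0 t0.2 (by simpa using hε)]
  intro x hx y hy
  refine isPreconnected_Icc.constant (f := c) (s := Icc a b) ?_ hx hy
  intro t ht
  exact hcont t ht (by simp [hPempty])

end VVTaylor

namespace VVTaylor

theorem exists_dual_nonpos {E : Type*} [NormedAddCommGroup E] [NormedSpace ℝ E]
    [FiniteDimensional ℝ E] (f f' : ℝ → E) (hfc : ContinuousOn f (Icc 0 1))
    (hf : ∀ t ∈ Ioo (0 : ℝ) 1, HasDerivAt f (f' t) t) (h01 : f 0 = f 1)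
    (h : (0 : E) ∉ convexHull ℝ (image f' (Ioo 0 1))) :
    ∃ φ : E →L[ℝ] ℝ, φ ≠ 0 ∧ ∀ t ∈ Ioo (0 : ℝ) 1, φ (f' t) ≤ 0 := by
  set S := image f' (Ioo (0 : ℝ) 1) with hS
  by_cases hI : (interior (convexHull ℝ S)).Nonempty
  · obtain ⟨φ, hφ⟩ := geometric_hahn_banach_open_point (convex_convexHull ℝ S).interior
      isOpen_interior (fun h0 => h (interior_subset h0))
    refine ⟨φ, ?_, fun t ht => ?_⟩
    · rintro rfl
      obtain ⟨x, hx⟩ := hI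
      simpa using hφ x hx
    · have h1 : f' t ∈ closure (interior (convexHull ℝ S)) := by
        rw [(convex_convexHull ℝ S).closure_interior_eq_closure_of_nonempty_interior hI]
        exact subset_closure (subset_convexHull ℝ S ⟨t, ht, rfl⟩)
      have h2 : closure (interior (convexHull ℝ S)) ⊆ {x | φ x ≤ 0} :=
        closure_minimal (fun x hx => by simpa using (hφ x hx).le)
          (isClosed_le φ.continuous continuous_const)
      exact h2 h1
  · rw [interior_convexHull_nonempty_iff_affineSpan_eq_top] at hI
    have hSne : S.Nonempty := ⟨_, ⟨1 / 2, by norm_num, rfl⟩⟩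
    have hv : vectorSpan ℝ S ≠ ⊤ := by
      intro hv
      exact hI ((AffineSubspace.affineSpan_eq_top_iff_vectorSpan_eq_top_of_nonempty ℝ E E hSne).2 hv)
    obtain ⟨φ, hφ, hle⟩ := Submodule.exists_le_ker_of_lt_top _ (lt_top_iff_ne_top.2 hv)
    let ψ : E →L[ℝ] ℝ := LinearMap.toContinuousLinearMap φ
    obtain ⟨c, hc, hc0⟩ := exists_hasDerivAt_eq_zero (f := fun t => ψ (f t))
      (f' := fun t => ψ (f' t)) (zero_lt_one) (ψ.continuous.comp_continuousOn hfc)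
      (by simp only [h01]) (fun x hx => ψ.hasFDerivAt.comp_hasDerivAt x (hf x hx))
    refine ⟨ψ, ?_, fun t ht => ?_⟩
    · intro h0
      apply hφ
      ext x
      exact DFunLike.congr_fun h0 x
    · have h1 := hle (vsub_mem_vectorSpan ℝ (⟨t, ht, rfl⟩ : f' t ∈ S) (⟨c, hc, rfl⟩ : f' c ∈ S))
      have h2 : ψ (f' t - f' c) = 0 := h1
      rw [map_sub] at h2
      linarith

theorem dual_zero {E : Type*} [NormedAddCommGroup E] [NormedSpace ℝ E]
    (f f' : ℝ → E) (hfc : ContinuousOn f (Icc 0 1))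
    (hf : ∀ t ∈ Ioo (0 : ℝ) 1, HasDerivAt f (f' t) t) (h01 : f 0 = f 1)
    (φ : E →L[ℝ] ℝ) (hφ : ∀ t ∈ Ioo (0 : ℝ) 1, φ (f' t) ≤ 0) :
    ∀ t ∈ Ioo (0 : ℝ) 1, φ (f' t) = 0 := by
  have hd : ∀ t ∈ Ioo (0 : ℝ) 1, HasDerivAt (fun t => φ (f t)) (φ (f' t)) t :=
    fun x hx => φ.hasFDerivAt.comp_hasDerivAt x (hf x hx)
  have hanti : AntitoneOn (fun t => φ (f t)) (Icc 0 1) := by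
    refine antitoneOn_of_deriv_nonpos (convex_Icc 0 1) (φ.continuous.comp_continuousOn hfc) ?_ ?_
    · rw [interior_Icc]
      exact fun x hx => (hd x hx).differentiableAt.differentiableWithinAt
    · rw [interior_Icc]
      intro x hx
      rw [(hd x hx).deriv]
      exact hφ x hx
  intro t ht
  have hconst : (fun t => φ (f t)) =ᶠ[𝓝 t] fun _ => φ (f 0) := by
    filter_upwards [isOpen_Ioo.mem_nhds ht] with x hx
    have h1 := hanti (left_mem_Icc.2 zero_le_one) (Ioo_subset_Icc_self hx) hx.1.le
    have h2 := hanti (Ioo_subset_Icc_self hx) (right_mem_Icc.2 zero_le_one) hx.2.le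
    simp only at h1 h2
    rw [← h01] at h2
    exact le_antisymm h1 h2
  exact (hd t ht).unique ((hasDerivAt_const t (φ (f 0))).congr_of_eventuallyEq hconst)

theorem zero_mem_hull.{u} (n : ℕ) : ∀ (E : Type u) [NormedAddCommGroup E] [NormedSpace ℝ E]
    [FiniteDimensional ℝ E] (_ : Module.finrank ℝ E = n) (f f' : ℝ → E)
    (_ : ContinuousOn f (Icc 0 1))
    (_ : ∀ t ∈ Ioo (0 : ℝ) 1, HasDerivAt f (f' t) t) (_ : f 0 = f 1),
    (0 : E) ∈ convexHull ℝ (image f' (Ioo 0 1)) := by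
  induction n using Nat.strong_induction_on with
  | _ n ih =>
    intro E _ _ _ hn f f' hfc hf h01
    by_contra hcon
    obtain ⟨φ, hφ0, hφ⟩ := exists_dual_nonpos f f' hfc hf h01 hcon
    have hz := dual_zero f f' hfc hf h01 φ hφ
    let W : Submodule ℝ E := LinearMap.ker (φ : E →ₗ[ℝ] ℝ)
    have hW : W ≠ ⊤ := by
      intro h
      apply hφ0
      ext x
      have : x ∈ W := h ▸ Submodule.mem_top
      exact this
    have hlt : Module.finrank ℝ W < n := hn ▸ Submodule.finrank_lt hW
    obtain ⟨π, hπ⟩ := W.subtype.exists_leftInverse_of_injective W.ker_subtype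
    let π' : E →L[ℝ] W := LinearMap.toContinuousLinearMap π
    have h1 := ih _ hlt W rfl (fun t => π' (f t)) (fun t => π' (f' t))
      (π'.continuous.comp_continuousOn hfc)
      (fun x hx => π'.hasFDerivAt.comp_hasDerivAt x (hf x hx)) (by simp only [h01])
    apply hcon
    have h2 : W.subtype 0 ∈ image W.subtype
        (convexHull ℝ (image (fun t => π' (f' t)) (Ioo 0 1))) :=
      ⟨0, h1, rfl⟩
    rw [LinearMap.image_convexHull, image_image, map_zero] at h2
    refine (convexHull_mono ?_) h2
    rintro _ ⟨t, ht, rfl⟩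
    refine ⟨t, ht, ?_⟩
    have h3 := LinearMap.congr_fun hπ ⟨f' t, hz t ht⟩
    have h4 : π (f' t) = ⟨f' t, hz t ht⟩ := h3
    change f' t = W.subtype (π (f' t))
    rw [h4]
    rfl

end VVTaylor

namespace VVTaylor

/-- `0` is a convex combination of `k` values of `f'` on `(0,1)`. -/
def Rep {E : Type*} [AddCommGroup E] [Module ℝ E] (f' : ℝ → E) (k : ℕ) : Prop :=
  ∃ (t : Fin k → ℝ) (lam : Fin k → ℝ), (∀ l, t l ∈ Ioo (0 : ℝ) 1) ∧ (∀ l, 0 ≤ lam l) ∧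
    ∑ l, lam l = 1 ∧ ∑ l, lam l • f' (t l) = 0

theorem Rep.succ {E : Type*} [AddCommGroup E] [Module ℝ E] {f' : ℝ → E} {k : ℕ}
    (h : Rep f' k) : Rep f' (k + 1) := by
  obtain ⟨t, lam, h1, h2, h3, h4⟩ := h
  refine ⟨Fin.cons (1 / 2) t, Fin.cons 0 lam, ?_, ?_, ?_, ?_⟩
  · intro l
    refine Fin.cases ?_ (fun i => ?_) l
    · simp only [Fin.cons_zero]; norm_num
    · simpa using h1 i
  · intro l
    refine Fin.cases ?_ (fun i => ?_) l
    · simp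
    · simpa using h2 i
  · simp [Fin.sum_univ_succ, h3]
  · simp [Fin.sum_univ_succ, h4]

theorem Rep.mono {E : Type*} [AddCommGroup E] [Module ℝ E] {f' : ℝ → E} {k m : ℕ}
    (h : Rep f' k) (hkm : k ≤ m) : Rep f' m := by
  induction m, hkm using Nat.le_induction with
  | base => exact h
  | succ m _ ih => exact ih.succ

theorem Rep.of_fintype {E : Type*} [AddCommGroup E] [Module ℝ E] {f' : ℝ → E}
    {κ : Type*} [Fintype κ] (t lam : κ → ℝ) (h1 : ∀ l, t l ∈ Ioo (0 : ℝ) 1)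
    (h2 : ∀ l, 0 ≤ lam l) (h3 : ∑ l, lam l = 1) (h4 : ∑ l, lam l • f' (t l) = 0) :
    Rep f' (Fintype.card κ) := by
  let e := (Fintype.equivFin κ).symm
  refine ⟨t ∘ e, lam ∘ e, fun l => h1 _, fun l => h2 _, ?_, ?_⟩
  · rw [← h3]; exact e.sum_comp lam
  · rw [← h4]; exact e.sum_comp (fun l => lam l • f' (t l))

/-- Removing one vertex of a simplex when there is a tie. -/
theorem rep_of_tie {E : Type*} [NormedAddCommGroup E] [NormedSpace ℝ E]
    {ι : Type*} [Fintype ι] (B : AffineBasis ι ℝ E) (f' : ℝ → E) (τ : ι → ℝ)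
    (hτ : ∀ i, τ i ∈ Ioo (0 : ℝ) 1) (hB : ∀ i, B i = f' (τ i))
    (hw : ∀ i, 0 < B.coord i 0) (t : ℝ) (ht : t ∈ Ioo (0 : ℝ) 1) (i k : ι) (hik : i ≠ k)
    (hmax : ∀ j, B.coord j (f' t) / B.coord j 0 ≤ B.coord i (f' t) / B.coord i 0)
    (htie : B.coord i (f' t) / B.coord i 0 ≤ B.coord k (f' t) / B.coord k 0) :
    Rep f' (Fintype.card ι - 1) := by
  classical
  set x := f' t with hx
  set β := B.coord i x / B.coord i 0 with hβ
  have hle : ∀ j, B.coord j x ≤ β * B.coord j 0 := fun j => (div_le_iff₀ (hw j)).1 (hmax j)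
  have hβ1 : 1 ≤ β := by
    have h1 : ∑ j, B.coord j x ≤ ∑ j, β * B.coord j 0 := Finset.sum_le_sum fun j _ => hle j
    rw [← Finset.mul_sum, B.sum_coord_apply_eq_one, B.sum_coord_apply_eq_one] at h1
    linarith
  have hβ0 : 0 < β := by linarith
  have hi : B.coord i x = β * B.coord i 0 := by
    rw [hβ]; field_simp [(hw i).ne']
  have hk : B.coord k x = β * B.coord k 0 :=
    le_antisymm (hle k) ((le_div_iff₀ (hw k)).1 htie)
  let d : ι → ℝ := fun j => B.coord j 0 - β⁻¹ * B.coord j x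
  have hd : ∀ j, 0 ≤ d j := by
    intro j
    have h1 := mul_le_mul_of_nonneg_left (hle j) (inv_nonneg.2 hβ0.le)
    rw [← mul_assoc, inv_mul_cancel₀ hβ0.ne', one_mul] at h1
    simp only [d]; linarith
  have hdi : d i = 0 := by
    simp only [d]; rw [hi, ← mul_assoc, inv_mul_cancel₀ hβ0.ne']; ring
  have hdk : d k = 0 := by
    simp only [d]; rw [hk, ← mul_assoc, inv_mul_cancel₀ hβ0.ne']; ring
  have hsum : ∑ j, d j = 1 - β⁻¹ := by
    simp only [d, Finset.sum_sub_distrib, ← Finset.mul_sum, B.sum_coord_apply_eq_one]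
    ring
  have hvec : ∑ j, d j • B j = - (β⁻¹ • x) := by
    simp only [d, sub_smul, Finset.sum_sub_distrib, mul_smul, ← Finset.smul_sum,
      B.linear_combination_coord_eq_self]
    simp
  let T : ι → ℝ := fun j => if j = i then t else τ j
  let Λ : ι → ℝ := fun j => if j = i then β⁻¹ else d j
  have hΛk : Λ k = 0 := by simp [Λ, Ne.symm hik, hdk]
  have hΛs : ∑ j, Λ j = 1 := by
    have h1 : ∀ j, Λ j = d j + if j = i then β⁻¹ else 0 := by
      intro j
      by_cases h : j = i
      · subst h; simp [Λ, hdi]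
      · simp [Λ, h]
    simp [h1, Finset.sum_add_distrib, hsum]
  have hΛv : ∑ j, Λ j • f' (T j) = 0 := by
    have h1 : ∀ j, Λ j • f' (T j) = d j • B j + if j = i then β⁻¹ • x else 0 := by
      intro j
      by_cases h : j = i
      · subst h; simp [Λ, T, hdi, hx]
      · simp [Λ, T, h, hB]
    simp [h1, Finset.sum_add_distrib, hvec]
  have hcard : Fintype.card {j : ι // j ≠ k} = Fintype.card ι - 1 := by
    simp [Fintype.card_subtype_compl]
  rw [← hcard]
  refine Rep.of_fintype (fun j => T j) (fun j => Λ j) ?_ ?_ ?_ ?_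
  · intro l
    simp only [T]; split_ifs
    · exact ht
    · exact hτ _
  · intro l
    simp only [Λ]; split_ifs
    · exact (inv_pos.2 hβ0).le
    · exact hd _
  · rw [← hΛs, Fintype.sum_eq_add_sum_subtype_ne Λ k, hΛk, zero_add]
  · rw [← hΛv, Fintype.sum_eq_add_sum_subtype_ne (fun j => Λ j • f' (T j)) k, hΛk, zero_smul,
      zero_add]

theorem mcleod {E : Type*} [NormedAddCommGroup E] [NormedSpace ℝ E]
    [FiniteDimensional ℝ E] (m : ℕ) (hm : 1 ≤ m) (hdim : Module.finrank ℝ E = m)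
    (f f' : ℝ → E) (hfc : ContinuousOn f (Icc 0 1))
    (hf : ∀ t ∈ Ioo (0 : ℝ) 1, HasDerivAt f (f' t) t) (h01 : f 0 = f 1) : Rep f' m := by
  classical
  obtain ⟨ι, _, z, w, hz, hind, hw, hw1, hwz⟩ :=
    eq_pos_convex_span_of_mem_convexHull (zero_mem_hull m E hdim f f' hfc hf h01)
  have hex : ∀ i, ∃ t ∈ Ioo (0 : ℝ) 1, f' t = z i := fun i => hz ⟨i, rfl⟩
  choose τ hτ hτz using hex
  by_cases hcard : Fintype.card ι ≤ m
  · refine Rep.mono (Rep.of_fintype τ w hτ (fun i => (hw i).le) hw1 ?_) hcard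
    simp only [hτz, hwz]
  have hcard' : Fintype.card ι = m + 1 := by
    have h1 := hind.card_le_finrank_succ
    have h2 := Submodule.finrank_le (vectorSpan ℝ (range z))
    omega
  let B : AffineBasis ι ℝ E := ⟨z, hind,
    hind.affineSpan_eq_top_iff_card_eq_finrank_add_one.2 (by rw [hcard', hdim])⟩
  have hBz : ∀ i, B i = z i := fun i => rfl
  have hB0 : ∀ i, B.coord i 0 = w i := by
    intro i
    have h1 := B.coord_apply_combination_of_mem (Finset.mem_univ i) hw1
    rw [Finset.univ.affineCombination_eq_linear_combination _ _ hw1] at h1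
    rw [← h1, ← hwz]
    rfl
  have hwB : ∀ i, 0 < B.coord i 0 := fun i => by rw [hB0]; exact hw i
  by_contra hcon
  have hno : ∀ t ∈ Ioo (0 : ℝ) 1, ∃ i, ∀ j, j ≠ i →
      B.coord j (f' t) / B.coord j 0 < B.coord i (f' t) / B.coord i 0 := by
    intro t ht
    have hne : Nonempty ι := Fintype.card_pos_iff.1 (by omega)
    obtain ⟨i, hi⟩ := Finite.exists_max (fun i => B.coord i (f' t) / B.coord i 0)
    refine ⟨i, fun j hj => ?_⟩
    by_contra hlt
    push Not at hlt
    have h1 := rep_of_tie B f' τ hτ (fun i => by rw [hBz, hτz]) hwB t ht i j (Ne.symm hj) hi hlt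
    rw [hcard'] at h1
    exact hcon h1
  have hne : Nonempty ι := Fintype.card_pos_iff.1 (by omega)
  choose! c hc using hno
  have hnt : Nontrivial ι := Fintype.one_lt_card_iff_nontrivial.1 (by omega)
  have hcτ : ∀ i, c (τ i) = i := by
    intro i
    by_contra hne
    have h1 := hc (τ i) (hτ i) i (Ne.symm hne)
    rw [hτz, ← hBz, B.coord_apply_eq, B.coord_apply_ne hne, zero_div] at h1
    exact absurd h1 (not_lt.2 (div_nonneg zero_le_one (hwB i).le))
  let _ : TopologicalSpace ι := ⊥
  have : DiscreteTopology ι := ⟨rfl⟩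
  have key : ∀ i k, τ i < τ k → False := by
    intro i k hlt
    have hsub : Icc (τ i) (τ k) ⊆ Ioo 0 1 := fun x hx =>
      ⟨(hτ i).1.trans_le hx.1, hx.2.trans_lt (hτ k).2⟩
    let ℓ : ι → E →L[ℝ] ℝ := fun j => LinearMap.toContinuousLinearMap (B.coord j).linear
    have hℓ : ∀ j x, ℓ j x = B.coord j x - B.coord j 0 := by
      intro j x
      have h1 := (B.coord j).linearMap_vsub x 0
      rw [vsub_eq_sub, sub_zero, vsub_eq_sub] at h1
      exact h1
    have h := argmax_const hlt (fun j t => ℓ j (f t) / B.coord j 0)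
      (fun j t => ℓ j (f' t) / B.coord j 0) c
      (fun j t ht => ((ℓ j).hasFDerivAt.comp_hasDerivAt t (hf t (hsub ht))).div_const _)
      (by
        intro t ht j hj
        have h1 := hc t (hsub ht) j hj
        simp only [hℓ, sub_div, div_self (hwB _).ne']
        linarith)
      (τ i) (left_mem_Icc.2 hlt.le) (τ k) (right_mem_Icc.2 hlt.le)
    rw [hcτ, hcτ] at h
    subst h
    exact lt_irrefl _ hlt
  obtain ⟨i, k, hik⟩ := exists_pair_ne ι
  rcases lt_trichotomy (τ i) (τ k) with h | h | h
  · exact key i k h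
  · apply hik
    rw [← hcτ i, h, hcτ k]
  · exact key k i h

end VVTaylor

end

/-- **Vector-valued Taylor remainder theorem** (Ważewski–McLeod form): if `F : ℝ → E` with
`E` a real normed space of finite dimension `m ≥ 1` is `n` times continuously differentiable
on `[0,1]` and its `n`-th derivative is differentiable on `(0,1)`, then the `n`-th Taylor
remainder at `1` is a convex combination of `m` Lagrange-type remainder terms. -/
theorem vector_valued_taylor_remainder (E : Type*) [NormedAddCommGroup E] [NormedSpace ℝ E]
    [FiniteDimensional ℝ E] (m : ℕ) (hm : 1 ≤ m) (hdim : Module.finrank ℝ E = m)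
    (n : ℕ) (F : ℝ → E)
    (hF : ContDiffOn ℝ n F (Set.Icc 0 1))
    (hF' : DifferentiableOn ℝ (iteratedDerivWithin n F (Set.Icc 0 1)) (Set.Ioo 0 1)) :
    ∃ (t : Fin m → ℝ) (lam : Fin m → ℝ),
      (∀ l, t l ∈ Set.Ioo (0 : ℝ) 1) ∧ (∀ l, 0 ≤ lam l) ∧ (∑ l, lam l = 1) ∧
      F 1 - ∑ k ∈ Finset.range (n + 1),
          ((k.factorial : ℝ))⁻¹ • iteratedDerivWithin k F (Set.Icc 0 1) 0 =
        ∑ l, lam l • (((1 - t l) ^ n / (n.factorial : ℝ)) •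
          iteratedDerivWithin (n + 1) F (Set.Icc 0 1) (t l)) := by
  set G : ℝ → E := fun y => taylorWithinEval F n (Set.Icc 0 1) y 1 with hG
  set G' : ℝ → E := fun t => (((n.factorial : ℝ)⁻¹ * (1 - t) ^ n) •
    iteratedDerivWithin (n + 1) F (Set.Icc 0 1) t) with hG'
  have hGc : ContinuousOn G (Set.Icc 0 1) :=
    continuousOn_taylorWithinEval (uniqueDiffOn_Icc zero_lt_one) hF
  have hGd : ∀ t ∈ Set.Ioo (0 : ℝ) 1, HasDerivAt G (G' t) t := fun t ht =>
    taylorWithinEval_hasDerivAt_Ioo 1 zero_lt_one ht hF hF'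
  set v : E := G 1 - G 0 with hv
  obtain ⟨t, lam, h1, h2, h3, h4⟩ := VVTaylor.mcleod m hm hdim (fun t => G t - t • v)
    (fun t => G' t - v) (hGc.sub (by fun_prop))
    (fun t ht => by
      have := (hGd t ht).sub ((hasDerivAt_id t).smul_const v)
      rw [one_smul] at this
      exact this)
    (by simp [hv])
  refine ⟨t, lam, h1, h2, h3, ?_⟩
  have h5 : v = ∑ l, lam l • G' (t l) := by
    simp only [smul_sub, Finset.sum_sub_distrib, ← Finset.sum_smul, h3, one_smul] at h4
    exact (sub_eq_zero.1 h4).symm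
  have h6 : v = F 1 - ∑ k ∈ Finset.range (n + 1),
      ((k.factorial : ℝ))⁻¹ • iteratedDerivWithin k F (Set.Icc 0 1) 0 := by
    simp only [hv, hG, taylorWithinEval_self]
    simp [taylor_within_apply]
  rw [← h6, h5]
  refine Finset.sum_congr rfl fun l _ => ?_
  simp only [hG', div_eq_inv_mul]
end

section
/- From approximate to strict inequalities through smoothing (Lemma): Let d ≥ 2 and let f be a concave, nonnegative real-valued function on the probability simplex in ℝ^d such that f(p) < f(u_d) for every probability vector p ≠ u_d. Let p, q be probability vectors in ℝ^d, η > 0 with f(p) ≤ f(q) + η, and let ε ∈ (0, 1/2] satisfy ε·( f(u_d) − sup{ f(ρ) : ρ a probability vector in ℝ^d with ‖ρ − u_d‖₁ ≥ ε/2 } ) ≥ 2η. Then f(p) ≤ f(q̃(ε)) − min{η, f(u_d) − f(p)}. -/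
/-- A probability vector: nonnegative entries summing to one. -/
def IsProbVec {d : ℕ} (p : Fin d → ℝ) : Prop :=
  (∀ i, 0 ≤ p i) ∧ ∑ i, p i = 1

/-- ℓ¹ distance between two vectors. -/
def l1Dist {d : ℕ} (p q : Fin d → ℝ) : ℝ :=
  ∑ i, |p i - q i|

/-- The uniform probability vector on `d` outcomes. -/
noncomputable def unif (d : ℕ) : Fin d → ℝ := fun _ => 1 / d

/-- The smoothed vector `q̃(ε)`: the uniform vector if `q` is `ε`-close to uniform in ℓ¹,
otherwise the mixture `(1−ε)q + ε·u_d`. -/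
noncomputable def smoothed {d : ℕ} (q : Fin d → ℝ) (ε : ℝ) : Fin d → ℝ :=
  if l1Dist q (unif d) < ε then unif d else fun i => (1 - ε) * q i + ε * (1 / d)

/-- Rényi entropy `S_α(p) = (1/(1−α)) ln Σᵢ pᵢ^α` (real powers, `0^α = 0` for `α > 0`). -/
noncomputable def renyiEntropy (α : ℝ) {d : ℕ} (p : Fin d → ℝ) : ℝ :=
  (1 - α)⁻¹ * Real.log (∑ i, p i ^ α)

/-- Shannon entropy `S₁(p) = −Σᵢ pᵢ ln pᵢ` (with `0 ln 0 = 0`). -/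
noncomputable def shannonEntropy {d : ℕ} (p : Fin d → ℝ) : ℝ :=
  -∑ i, p i * Real.log (p i)

/-- Min-entropy `S_∞(p) = −ln maxᵢ pᵢ`. -/
noncomputable def minEntropy {d : ℕ} (p : Fin d → ℝ) : ℝ :=
  -Real.log (⨆ i, p i)

/-- Tsallis entropy: `T_α(p) = (1 − Σᵢ pᵢ^α)/(α−1)` for `α ≠ 1`, Shannon entropy at `α = 1`. -/
noncomputable def tsallisEntropy (α : ℝ) {d : ℕ} (p : Fin d → ℝ) : ℝ :=
  if α = 1 then shannonEntropy p else (1 - ∑ i, p i ^ α) / (α - 1)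

/-- **From approximate to strict inequalities through smoothing**: for a concave nonnegative
function `f` on the simplex which is uniquely maximised at the uniform distribution, an
approximate inequality `f(p) ≤ f(q) + η` upgrades to a strict gap against the smoothed
vector `q̃(ε)`, provided `ε ∈ (0,1/2]` satisfies the stated condition. -/
theorem approx_to_strict_by_smoothing (d : ℕ) (hd : 2 ≤ d)
    (f : (Fin d → ℝ) → ℝ)
    (hconc : ∀ p q : Fin d → ℝ, IsProbVec p → IsProbVec q → ∀ a b : ℝ,
      0 ≤ a → 0 ≤ b → a + b = 1 → a * f p + b * f q ≤ f (fun i => a * p i + b * q i))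
    (hnonneg : ∀ p : Fin d → ℝ, IsProbVec p → 0 ≤ f p)
    (hmax : ∀ p : Fin d → ℝ, IsProbVec p → p ≠ unif d → f p < f (unif d))
    (p q : Fin d → ℝ) (hp : IsProbVec p) (hq : IsProbVec q)
    (η : ℝ) (hη : 0 < η) (hfpq : f p ≤ f q + η)
    (ε : ℝ) (hε0 : 0 < ε) (hε12 : ε ≤ 1 / 2)
    (hεcond : 2 * η ≤
      ε * (f (unif d) -
        sSup (f '' {ρ : Fin d → ℝ | IsProbVec ρ ∧ ε / 2 ≤ l1Dist ρ (unif d)}))) :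
    f p ≤ f (smoothed q ε) - min η (f (unif d) - f p) := by
  have hd0 : (d : ℝ) ≠ 0 := by
    have : d ≠ 0 := by omega
    exact_mod_cast this
  have hu : IsProbVec (unif d) := by
    refine ⟨fun i => ?_, ?_⟩
    · unfold unif
      positivity
    · simp [unif, hd0]
  have hle : ∀ ρ : Fin d → ℝ, IsProbVec ρ → f ρ ≤ f (unif d) := by
    intro ρ hρ
    by_cases h : ρ = unif d
    · rw [h]
    · exact (hmax ρ hρ h).le
  unfold smoothed
  split_ifs with h
  · linarith [min_le_right η (f (unif d) - f p)]
  · have hs : f q ≤ sSup (f '' {ρ : Fin d → ℝ | IsProbVec ρ ∧ ε / 2 ≤ l1Dist ρ (unif d)}) := by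
      apply le_csSup
      · refine ⟨f (unif d), ?_⟩
        rintro _ ⟨ρ, hρ, rfl⟩
        exact hle ρ hρ.1
      · exact ⟨q, ⟨hq, by linarith⟩, rfl⟩
    have hc := hconc q (unif d) hq hu (1 - ε) ε (by linarith) hε0.le (by ring)
    have hc' : (1 - ε) * f q + ε * f (unif d) ≤
        f (fun i => (1 - ε) * q i + ε * (1 / d)) := hc
    have hm := mul_le_mul_of_nonneg_left hs hε0.le
    linarith [min_le_left η (f (unif d) - f p)]
end

section
/- Reduction to binary distributions for multiplicative convex/concave functions (Lemma): Let g : [0,∞) → ℝ be nonnegative and multiplicative, i.e. g(xy) = g(x)g(y) for all x,y ≥ 0 and g(1) = 1, with g(1/2) > 0, and for a probability vector p ∈ ℝ^d set f_g(p) := Σ_{i=1}^d g(p_i). Let d ≥ 2, δ ∈ [0,2], and let p ∈ ℝ^d be a probability vector with ‖p − u_d‖₁ ≥ δ, and write p₂^δ := ((1+δ/2)/2, (1−δ/2)/2). If g is convex on [0,∞), then f_g(p) − f_g(u_d) ≥ (f_g(u_d)/f_g(u_2))·( f_g(p₂^δ) − f_g(u_2) ). If instead g is concave on [0,∞) (with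 the other assumptions unchanged), then f_g(u_d) − f_g(p) ≥ (f_g(u_d)/f_g(u_2))·( f_g(u_2) − f_g(p₂^δ) ). -/
lemma core_convex (d : ℕ) (hd : 2 ≤ d) (h : ℝ → ℝ) (hc : ConvexOn ℝ (Set.Ici 0) h)
    (x : Fin d → ℝ) (hx : ∀ i, 0 ≤ x i) (hs : ∑ i, x i = d) (t : ℝ) (ht0 : 0 ≤ t) (ht1 : t ≤ 1)
    (hD : 2 * t * d ≤ ∑ i, |x i - 1|) :
    (d : ℝ) / 2 * (h (1 + t) + h (1 - t)) ≤ ∑ i, h (x i) := by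
  have hd0 : (0 : ℝ) < d := by
    have : 0 < d := by omega
    exact_mod_cast this
  obtain ⟨s, hsdef⟩ : ∃ s : ℝ, ∑ i, |x i - 1| = 2 * s * d :=
    ⟨(∑ i, |x i - 1|) / (2 * d), by field_simp⟩
  have hts : t ≤ s := by
    rw [hsdef] at hD
    nlinarith [le_of_mul_le_mul_right hD hd0]
  have hmaxsum : ∑ i, max (x i) 1 = d * (1 + s) := by
    have : ∀ i, max (x i) 1 = (1 / 2) * (x i + 1 + |x i - 1|) := by
      intro i
      rcases le_total (x i) 1 with h1 | h1
      · rw [max_eq_right h1, abs_of_nonpos (by linarith)]; ring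
      · rw [max_eq_left h1, abs_of_nonneg (by linarith)]; ring
    simp_rw [this]
    rw [← Finset.mul_sum, Finset.sum_add_distrib, Finset.sum_add_distrib, hs, hsdef]
    simp
    ring
  have hminsum : ∑ i, min (x i) 1 = d * (1 - s) := by
    have : ∀ i, min (x i) 1 = x i + 1 - max (x i) 1 := by
      intro i
      linarith [min_add_max (x i) 1]
    simp_rw [this]
    rw [Finset.sum_sub_distrib, Finset.sum_add_distrib, hs, hmaxsum]
    simp
    ring
  have hs1 : 0 ≤ 1 - s := by
    have : 0 ≤ ∑ i, min (x i) 1 := Finset.sum_nonneg fun i _ => le_min (hx i) zero_le_one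
    rw [hminsum] at this
    exact nonneg_of_mul_nonneg_right this hd0
  have jensen : ∀ (y : Fin d → ℝ) (m : ℝ), (∀ i, 0 ≤ y i) → ∑ i, y i = d * m →
      d * h m ≤ ∑ i, h (y i) := by
    intro y m hy hm
    have := hc.map_sum_le (t := Finset.univ) (w := fun _ => (1 / d : ℝ)) (p := y)
      (fun _ _ => by positivity) (by simp [hd0.ne']) (fun i _ => hy i)
    simp only [smul_eq_mul, ← Finset.mul_sum] at this
    rw [hm] at this
    have e : 1 / (d : ℝ) * (d * m) = m := by field_simp
    rw [e] at this
    calc (d : ℝ) * h m ≤ d * (1 / d * ∑ i, h (y i)) := by gcongr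
      _ = _ := by field_simp
  have hc2 : ∀ u v a b : ℝ, 0 ≤ u → 0 ≤ v → 0 ≤ a → 0 ≤ b → a + b = 1 →
      h (a * u + b * v) ≤ a * h u + b * h v := by
    intro u v a b hu hv ha hb hab
    exact hc.2 hu hv ha hb hab
  have j1 := jensen _ _ (fun i => le_max_of_le_left (hx i)) hmaxsum
  have j2 := jensen _ _ (fun i => le_min (hx i) zero_le_one) hminsum
  have hsplit : ∑ i, h (max (x i) 1) + ∑ i, h (min (x i) 1) = ∑ i, h (x i) + d * h 1 := by
    rw [← Finset.sum_add_distrib]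
    have : ∀ i, h (max (x i) 1) + h (min (x i) 1) = h (x i) + h 1 := by
      intro i
      rcases le_total (x i) 1 with h1 | h1
      · rw [max_eq_right h1, min_eq_left h1]; ring
      · rw [max_eq_left h1, min_eq_right h1]
    simp_rw [this]
    rw [Finset.sum_add_distrib]
    simp
  have hmid : 2 * h 1 ≤ h (1 + t) + h (1 - t) := by
    have := hc2 (1 + t) (1 - t) (1 / 2) (1 / 2) (by linarith) (by linarith)
      (by norm_num) (by norm_num) (by norm_num)
    have e : 1 / 2 * (1 + t) + 1 / 2 * (1 - t) = 1 := by ring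
    rw [e] at this
    linarith
  have hmono : h (1 + t) + h (1 - t) ≤ h (1 + s) + h (1 - s) := by
    rcases eq_or_lt_of_le hts with rfl | hlt
    · exact le_rfl
    have hs0 : 0 < s := by linarith
    obtain ⟨r, hr⟩ : ∃ r, t = r * s := ⟨t / s, by field_simp⟩
    have hr0 : 0 ≤ r := by
      by_contra hneg
      push Not at hneg
      nlinarith
    have hr1 : r ≤ 1 := by
      by_contra hneg
      push Not at hneg
      nlinarith
    have a1 := hc2 (1 + s) (1 - s) ((1 + r) / 2) ((1 - r) / 2) (by linarith) (by linarith)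
      (by linarith) (by linarith) (by ring)
    have a2 := hc2 (1 + s) (1 - s) ((1 - r) / 2) ((1 + r) / 2) (by linarith) (by linarith)
      (by linarith) (by linarith) (by ring)
    have e1 : (1 + r) / 2 * (1 + s) + (1 - r) / 2 * (1 - s) = 1 + t := by rw [hr]; ring
    have e2 : (1 - r) / 2 * (1 + s) + (1 + r) / 2 * (1 - s) = 1 - t := by rw [hr]; ring
    rw [e1] at a1
    rw [e2] at a2
    linarith
  have k1 := mul_le_mul_of_nonneg_left hmid hd0.le
  have k2 := mul_le_mul_of_nonneg_left hmono hd0.le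
  linarith

/-- Reduction to binary distributions for multiplicative convex/concave functions. -/
theorem binary_reduction_multiplicative (d : ℕ) (hd : 2 ≤ d) (g : ℝ → ℝ)
    (hnn : ∀ x : ℝ, 0 ≤ x → 0 ≤ g x)
    (hmul : ∀ x y : ℝ, 0 ≤ x → 0 ≤ y → g (x * y) = g x * g y)
    (hg1 : g 1 = 1) (hghalf : 0 < g (1 / 2))
    (δ : ℝ) (hδ0 : 0 ≤ δ) (hδ2 : δ ≤ 2)
    (p : Fin d → ℝ) (hp : IsProbVec p) (hdist : δ ≤ l1Dist p (unif d)) :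
    (ConvexOn ℝ (Set.Ici 0) g →
      ((d : ℝ) * g (1 / d) / (2 * g (1 / 2))) *
          ((g ((1 + δ / 2) / 2) + g ((1 - δ / 2) / 2)) - 2 * g (1 / 2)) ≤
        (∑ i, g (p i)) - (d : ℝ) * g (1 / d)) ∧
    (ConcaveOn ℝ (Set.Ici 0) g →
      ((d : ℝ) * g (1 / d) / (2 * g (1 / 2))) *
          (2 * g (1 / 2) - (g ((1 + δ / 2) / 2) + g ((1 - δ / 2) / 2))) ≤
        (d : ℝ) * g (1 / d) - ∑ i, g (p i)) := by
  have hd0 : (0 : ℝ) < d := by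
    have : 0 < d := by omega
    exact_mod_cast this
  obtain ⟨hp0, hp1⟩ := hp
  have hx : ∀ i, 0 ≤ (d : ℝ) * p i := fun i => mul_nonneg hd0.le (hp0 i)
  have hs : ∑ i, (d : ℝ) * p i = d := by rw [← Finset.mul_sum, hp1, mul_one]
  have hD : 2 * (δ / 2) * d ≤ ∑ i, |(d : ℝ) * p i - 1| := by
    have : ∀ i, |(d : ℝ) * p i - 1| = d * |p i - unif d i| := by
      intro i
      rw [← abs_of_pos hd0, ← abs_mul, abs_of_pos hd0]
      congr 1
      unfold unif
      field_simp
    simp_rw [this]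
    rw [← Finset.mul_sum]
    have := mul_le_mul_of_nonneg_left hdist hd0.le
    unfold l1Dist at this
    linarith
  have hG : 0 ≤ g (1 / d) := hnn _ (by positivity)
  have hsum : ∑ i, g (p i) = g (1 / d) * ∑ i, g (d * p i) := by
    rw [Finset.mul_sum]
    refine Finset.sum_congr rfl fun i _ => ?_
    rw [← hmul _ _ (by positivity) (hx i)]
    congr 1
    field_simp
  have hp : g ((1 + δ / 2) / 2) = g (1 / 2) * g (1 + δ / 2) := by
    rw [← hmul _ _ (by norm_num) (by linarith)]
    congr 1
    ring
  have hm : g ((1 - δ / 2) / 2) = g (1 / 2) * g (1 - δ / 2) := by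
    rw [← hmul _ _ (by norm_num) (by linarith)]
    congr 1
    ring
  have key : (d : ℝ) * g (1 / d) / (2 * g (1 / 2)) *
      ((g ((1 + δ / 2) / 2) + g ((1 - δ / 2) / 2)) - 2 * g (1 / 2)) =
      g (1 / d) * ((d : ℝ) / 2 * (g (1 + δ / 2) + g (1 - δ / 2))) - d * g (1 / d) := by
    rw [hp, hm]
    field_simp
  constructor
  · intro hc
    have := mul_le_mul_of_nonneg_left
      (core_convex d hd g hc _ hx hs (δ / 2) (by linarith) (by linarith) hD) hG
    rw [key, hsum]
    linarith
  · intro hc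
    have := mul_le_mul_of_nonneg_left
      (core_convex d hd (-g) hc.neg _ hx hs (δ / 2) (by linarith) (by linarith) hD) hG
    simp only [Pi.neg_apply, Finset.sum_neg_distrib] at this
    rw [hsum]
    linarith
end

section
/- From approximate to strict Rényi-entropy inequalities, min-entropy case (Proposition, part (i)): Let d ≥ 2, let p, q ∈ ℝ^d be probability vectors, let η_∞ ≥ 0 satisfy S_∞(p) ≤ S_∞(q) + η_∞, and let α > 1. Set ε := 4·√( (ln d)/α + η_∞ ) and assume ε ≤ 1/2. Then S_α(p) ≤ S_α(q̃(ε)) − min{ η_∞, ln d − S₁(p) }. -/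
lemma aux_sum_rpow_pos {d : ℕ} (p : Fin d → ℝ) (hp : IsProbVec p) (α : ℝ) :
    0 < ∑ i, p i ^ α := by
  obtain ⟨h0, h1⟩ := hp
  have hex : ∃ i, 0 < p i := by
    by_contra! h
    have : ∑ i, p i ≤ 0 := Finset.sum_nonpos (fun i _ => h i)
    linarith
  obtain ⟨i, hi⟩ := hex
  exact Finset.sum_pos' (fun j _ => Real.rpow_nonneg (h0 j) _)
    ⟨i, Finset.mem_univ i, Real.rpow_pos_of_pos hi _⟩

lemma aux_renyi_le_shannon {d : ℕ} (p : Fin d → ℝ) (hp : IsProbVec p) (α : ℝ) (hα : 1 < α) :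
    renyiEntropy α p ≤ shannonEntropy p := by
  have hZ := aux_sum_rpow_pos p hp α
  obtain ⟨h0, h1⟩ := hp
  unfold renyiEntropy shannonEntropy
  set Z := ∑ i, p i ^ α with hZdef
  have key : ∀ i, (α - 1) * (p i * Real.log (p i)) ≤ p i * Real.log Z + (p i ^ α / Z - p i) := by
    intro i
    rcases (h0 i).eq_or_lt with h | h
    · rw [← h, Real.zero_rpow (by linarith)]; simp
    · have hw : 0 < p i ^ (α - 1) / Z := div_pos (Real.rpow_pos_of_pos h _) hZ
      have h2 := Real.log_le_sub_one_of_pos hw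
      rw [Real.log_div (Real.rpow_pos_of_pos h _).ne' hZ.ne', Real.log_rpow h] at h2
      have h3 := mul_le_mul_of_nonneg_left h2 h.le
      have h4 : p i ^ α = p i * p i ^ (α - 1) := by
        rw [Real.rpow_sub_one h.ne']; field_simp
      have h5 : p i ^ α / Z = p i * (p i ^ (α - 1) / Z) := by rw [h4]; ring
      rw [h5]; linarith
  have hsum := Finset.sum_le_sum (fun i (_ : i ∈ Finset.univ) => key i)
  rw [← Finset.mul_sum, Finset.sum_add_distrib, Finset.sum_sub_distrib, ← Finset.sum_mul,
    ← Finset.sum_div, ← hZdef, h1, div_self hZ.ne'] at hsum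
  have h6 : (1 - α)⁻¹ * Real.log Z = -(Real.log Z / (α - 1)) := by
    rw [← neg_sub α 1, inv_neg]; ring
  rw [h6]
  apply neg_le_neg
  rw [le_div_iff₀ (by linarith)]
  linarith

lemma aux_shannon_le_log {d : ℕ} (hd : 2 ≤ d) (p : Fin d → ℝ) (hp : IsProbVec p) :
    shannonEntropy p ≤ Real.log d := by
  obtain ⟨h0, h1⟩ := hp
  have hd0 : (0 : ℝ) < d := by positivity
  unfold shannonEntropy
  have key : ∀ i, p i - 1 / d - p i * Real.log d ≤ p i * Real.log (p i) := by
    intro i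
    rcases (h0 i).eq_or_lt with h | h
    · rw [← h]; simp
    · have h2 := Real.log_le_sub_one_of_pos (x := 1 / (d * p i)) (by positivity)
      rw [Real.log_div one_ne_zero (by positivity), Real.log_mul hd0.ne' h.ne', Real.log_one] at h2
      have h3 := mul_le_mul_of_nonneg_left h2 h.le
      have h5 : p i * (1 / (d * p i) - 1) = 1 / d - p i := by field_simp
      rw [h5] at h3; linarith
  have hsum := Finset.sum_le_sum (fun i (_ : i ∈ Finset.univ) => key i)
  rw [Finset.sum_sub_distrib, Finset.sum_sub_distrib, ← Finset.sum_mul, h1] at hsum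
  have : ∑ i : Fin d, (1 : ℝ) / d = 1 := by simp [hd0.ne']
  linarith

lemma aux_le_sup {d : ℕ} (p : Fin d → ℝ) (i : Fin d) : p i ≤ ⨆ i, p i :=
  le_ciSup (Set.finite_range p).bddAbove i

lemma aux_sup_ge {d : ℕ} (hd : 2 ≤ d) (p : Fin d → ℝ) (hp : IsProbVec p) :
    1 ≤ d * ⨆ i, p i := by
  have := Finset.sum_le_sum (fun i (_ : i ∈ Finset.univ) => aux_le_sup p i)
  rw [hp.2] at this
  simpa using this

/-- Comparison of the Rényi entropy with the min-entropy. -/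
lemma aux_renyi_le_min {d : ℕ} (hd : 2 ≤ d) (p : Fin d → ℝ) (hp : IsProbVec p) (α : ℝ)
    (hα : 1 < α) : renyiEntropy α p ≤ minEntropy p + Real.log d / α := by
  have hlog := (aux_renyi_le_shannon p hp α hα).trans (aux_shannon_le_log hd p hp)
  have : Nonempty (Fin d) := ⟨⟨0, by omega⟩⟩
  obtain ⟨i, hi⟩ := exists_eq_ciSup_of_finite (f := p)
  have hm1 := aux_sup_ge hd p hp
  have hd0 : (0 : ℝ) < d := by positivity
  unfold minEntropy
  rw [← hi] at hm1 ⊢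
  have hpi : 0 < p i := by
    by_contra! h
    nlinarith
  have hle : p i ^ α ≤ ∑ j, p j ^ α :=
    Finset.single_le_sum (f := fun j => p j ^ α) (fun j _ => Real.rpow_nonneg (hp.1 j) _)
      (Finset.mem_univ i)
  have h2 := Real.log_le_log (Real.rpow_pos_of_pos hpi _) hle
  rw [Real.log_rpow hpi] at h2
  have h3 : Real.log (∑ j, p j ^ α) = (1 - α) * renyiEntropy α p := by
    unfold renyiEntropy
    rw [mul_inv_cancel_left₀ (by linarith)]
  rw [h3] at h2
  have h4 : Real.log d / α * α = Real.log d := div_mul_cancel₀ _ (by linarith)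
  by_contra! h
  have := mul_lt_mul_of_pos_right h (by linarith : (0 : ℝ) < α)
  nlinarith

lemma aux_renyi_ge {d : ℕ} (r : Fin d → ℝ) (hr : IsProbVec r) (α : ℝ)
    (hα : 1 < α) (K : ℝ) (hK : 0 < K) (h : ∀ i, r i ≤ K) :
    -Real.log K ≤ renyiEntropy α r := by
  have hZ := aux_sum_rpow_pos r hr α
  have hle : ∑ i, r i ^ α ≤ K ^ (α - 1) := by
    calc ∑ i, r i ^ α ≤ ∑ i, r i * K ^ (α - 1) := by
          apply Finset.sum_le_sum
          intro i _
          rcases (hr.1 i).eq_or_lt with h0 | h0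
          · rw [← h0, Real.zero_rpow (by linarith)]; simp
          · have h4 : r i ^ α = r i * r i ^ (α - 1) := by
              rw [Real.rpow_sub_one h0.ne']; field_simp
            rw [h4]
            exact mul_le_mul_of_nonneg_left
              (Real.rpow_le_rpow h0.le (h i) (by linarith)) h0.le
      _ = K ^ (α - 1) := by rw [← Finset.sum_mul, hr.2, one_mul]
  have h2 := Real.log_le_log hZ hle
  rw [Real.log_rpow hK] at h2
  have h3 : Real.log (∑ j, r j ^ α) = (1 - α) * renyiEntropy α r := by
    unfold renyiEntropy
    rw [mul_inv_cancel_left₀ (by linarith)]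
  rw [h3] at h2
  by_contra! h
  nlinarith

lemma aux_l1 {d : ℕ} (hd : 2 ≤ d) (q : Fin d → ℝ) (hq : IsProbVec q) :
    l1Dist q (unif d) ≤ 2 * (d * (⨆ i, q i) - 1) := by
  have hd0 : (0 : ℝ) < d := by positivity
  have hm1 := aux_sup_ge hd q hq
  have hM : 1 / (d : ℝ) ≤ ⨆ i, q i := by rw [div_le_iff₀ hd0]; linarith
  have hs : ∑ i : Fin d, (1 : ℝ) / d = 1 := by simp [hd0.ne']
  unfold l1Dist unif
  have key : ∀ i, |q i - 1 / d| ≤ 2 * ((⨆ i, q i) - 1 / d) - (q i - 1 / d) := by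
    intro i
    have := aux_le_sup q i
    rw [abs_le]; constructor <;> linarith
  have hsum := Finset.sum_le_sum (fun i (_ : i ∈ Finset.univ) => key i)
  refine hsum.trans ?_
  rw [Finset.sum_sub_distrib, Finset.sum_sub_distrib, hq.2, hs]
  simp only [Finset.sum_const, Finset.card_univ, Fintype.card_fin, nsmul_eq_mul]
  have : (d : ℝ) * (1 / d) = 1 := by field_simp
  nlinarith

/-- From approximate to strict Rényi-entropy inequalities, min-entropy case:
if `S_∞(p) ≤ S_∞(q) + η_∞` and `α > 1`, then with `ε = 4√(ln d/α + η_∞) ≤ 1/2` one has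
`S_α(p) ≤ S_α(q̃(ε)) − min{η_∞, ln d − S₁(p)}`. -/
theorem approx_to_strict_renyi_minEntropy (d : ℕ) (hd : 2 ≤ d)
    (p q : Fin d → ℝ) (hp : IsProbVec p) (hq : IsProbVec q)
    (ηinf : ℝ) (hηinf : 0 ≤ ηinf) (hS : minEntropy p ≤ minEntropy q + ηinf)
    (α : ℝ) (hα : 1 < α)
    (ε : ℝ) (hε : ε = 4 * Real.sqrt (Real.log d / α + ηinf)) (hε12 : ε ≤ 1 / 2) :
    renyiEntropy α p ≤
      renyiEntropy α (smoothed q ε) - min ηinf (Real.log d - shannonEntropy p) := by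
  have hd0 : (0 : ℝ) < d := by positivity
  have hd1 : (1 : ℝ) < d := by exact_mod_cast (by omega : 1 < d)
  have hL : 0 < Real.log d := Real.log_pos hd1
  have hs : ∑ i : Fin d, (1 : ℝ) / d = 1 := by simp [hd0.ne']
  have hsq0 : 0 < Real.log d / α + ηinf := by positivity
  have hεpos : 0 < ε := by rw [hε]; positivity
  have hε2 : ε ^ 2 = 16 * (Real.log d / α + ηinf) := by
    rw [hε, mul_pow, Real.sq_sqrt hsq0.le]; norm_num
  unfold smoothed
  split_ifs with hc
  · have h1 := aux_renyi_le_shannon p hp α hα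
    have h2 := aux_renyi_ge (unif d) ⟨fun i => by unfold unif; positivity, hs⟩ α hα (1 / d)
      (by positivity) (fun i => le_refl _)
    rw [one_div, Real.log_inv, neg_neg] at h2
    have h3 := min_le_right ηinf (Real.log d - shannonEntropy p)
    linarith
  · push Not at hc
    have h1 := aux_renyi_le_min hd p hp α hα
    have hM1 := aux_sup_ge hd q hq
    have hl1 := aux_l1 hd q hq
    unfold minEntropy at *
    have hle := aux_le_sup q
    set M := ⨆ i, q i with hMdef
    have hM : 0 < M := by
      by_contra! h
      nlinarith
    set x := ε * (1 - 1 / (d * M)) with hx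
    have hx8 : ε / 8 ≤ 1 - 1 / (d * M) := by
      rw [le_sub_comm, div_le_iff₀ (by positivity)]
      nlinarith
    have hinv : 0 < 1 / (d * M) := by positivity
    have hx1 : 0 < 1 - x := by rw [hx]; nlinarith
    have hKeq : (1 - ε) * M + ε * (1 / d) = M * (1 - x) := by
      rw [hx]; field_simp; ring
    have h2 := aux_renyi_ge (fun i => (1 - ε) * q i + ε * (1 / d))
      ⟨fun i => by
          have := hq.1 i
          have h' : 0 ≤ (1 - ε) * q i := mul_nonneg (by linarith) this
          positivity, by
          rw [Finset.sum_add_distrib, ← Finset.mul_sum, ← Finset.mul_sum, hq.2, hs]; ring⟩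
      α hα (M * (1 - x)) (by positivity) (fun i => by
        rw [← hKeq]
        have := mul_le_mul_of_nonneg_left (hle i) (by linarith : 0 ≤ 1 - ε)
        linarith)
    rw [Real.log_mul hM.ne' hx1.ne'] at h2
    have h3 := Real.log_le_sub_one_of_pos hx1
    have h4 : ε ^ 2 / 8 ≤ x := by rw [hx]; nlinarith
    have h5 := min_le_left ηinf (Real.log d - shannonEntropy p)
    have h6 : 0 < Real.log d / α := by positivity
    linarith
end

section
/- From approximate to strict Tsallis-entropy inequalities (Proposition, part (ii)): Let d ≥ 2, let p, q ∈ ℝ^d be probability vectors, let α > 0 and η_α > 0 satisfy T_α(p) ≤ T_α(q) + η_α. Define ε_T(α) := (16·η_α·d^{α−1})^{1/3} if α ≥ 1 and ε_T(α) := (16·η_α·d^{α−1}·α^{−1})^{1/3} if 0 < α < 1, and assume ε_T(α) ≤ 1/2. Then T_α(p) ≤ T_α(q̃(ε_T(α))) − min{ η_α, T_α(u_d) − T_α(p) }. -/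
/-- Entropy kernel: `T_α(p) = -∑ Lf α (p i)`. -/
noncomputable def Lf (α x : ℝ) : ℝ :=
  if α = 1 then x * Real.log x else (x ^ α - x) / (α - 1)

noncomputable def Df (α x : ℝ) : ℝ :=
  if α = 1 then Real.log x else (x ^ (α - 1) - 1) / (α - 1)

lemma Lf_cont (α : ℝ) (hα : 0 < α) : Continuous (Lf α) := by
  unfold Lf
  by_cases h : α = 1
  · simp only [h, if_true]; exact Real.continuous_mul_log
  · simp only [h, if_false]
    exact ((Real.continuous_rpow_const hα.le).sub continuous_id).div_const _

lemma Lf_deriv (α : ℝ) (x : ℝ) (hx : 0 < x) :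
    HasDerivAt (fun x => Lf α x - x) (α * Df α x) x := by
  unfold Lf Df
  by_cases h : α = 1
  · simp only [h, if_true]
    have := (Real.hasDerivAt_mul_log hx.ne').sub (hasDerivAt_id x)
    exact this.congr_deriv (by ring)
  · simp only [h, if_false]
    have h1 : α - 1 ≠ 0 := sub_ne_zero.2 h
    have := (((Real.hasDerivAt_rpow_const (p := α) (Or.inl hx.ne')).sub
      (hasDerivAt_id x)).div_const (α - 1)).sub (hasDerivAt_id x)
    refine this.congr_deriv ?_
    field_simp
    ring

lemma Df_ge (α : ℝ) (hα : 0 < α) (x : ℝ) (hx : 0 < x) : 1 - x⁻¹ ≤ Df α x := by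
  unfold Df
  split_ifs with h
  · exact Real.one_sub_inv_le_log_of_pos hx
  · rcases lt_or_gt_of_ne h with h1 | h1
    · rw [le_div_iff_of_neg (by linarith)]
      have := rpow_one_add_le_one_add_mul_self (s := x⁻¹ - 1) (p := 1 - α)
        (by have := inv_pos.2 hx; linarith) (by linarith) (by linarith)
      rw [show 1 + (x⁻¹ - 1) = x⁻¹ by ring, Real.inv_rpow hx.le, ← Real.rpow_neg hx.le,
        show -(1 - α) = α - 1 by ring] at this
      linarith
    · rw [le_div_iff₀ (by linarith)]
      have h2 := Real.one_sub_inv_le_log_of_pos hx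
      have h3 := Real.add_one_le_exp (Real.log x * (α - 1))
      rw [← Real.rpow_def_of_pos hx] at h3
      have := mul_le_mul_of_nonneg_right h2 (by linarith : 0 ≤ α - 1)
      linarith

lemma Df_nonpos (α : ℝ) (x : ℝ) (hx : 0 < x) (hx1 : x ≤ 1) : Df α x ≤ 0 := by
  unfold Df
  split_ifs with h
  · exact Real.log_nonpos hx.le hx1
  · rcases lt_or_gt_of_ne h with h1 | h1
    · apply div_nonpos_of_nonneg_of_nonpos _ (by linarith)
      have := Real.one_le_rpow_of_pos_of_le_one_of_nonpos hx hx1 (by linarith : α - 1 ≤ 0)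
      linarith
    · apply div_nonpos_of_nonpos_of_nonneg _ (by linarith)
      have := Real.rpow_le_one hx.le hx1 (by linarith : 0 ≤ α - 1)
      linarith

lemma low (α : ℝ) (hα : 0 < α) (x y : ℝ) (hx : 0 ≤ x) (hxy : x ≤ y) (hy : y ≤ 1) :
    Lf α y - y ≤ Lf α x - x := by
  have : AntitoneOn (fun x => Lf α x - x) (Set.Icc 0 1) := by
    apply antitoneOn_of_deriv_nonpos (convex_Icc 0 1)
    · exact ((Lf_cont α hα).sub continuous_id).continuousOn
    · intro z hz
      rw [interior_Icc] at hz
      exact (Lf_deriv α z hz.1).differentiableAt.differentiableWithinAt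
    · intro z hz
      rw [interior_Icc] at hz
      rw [(Lf_deriv α z hz.1).deriv]
      exact mul_nonpos_of_nonneg_of_nonpos hα.le (Df_nonpos α z hz.1 hz.2.le)
  exact this ⟨hx, hxy.trans hy⟩ ⟨hx.trans hxy, hy⟩ hxy

lemma high (α : ℝ) (hα : 0 < α) (x y : ℝ) (hx : 1 ≤ x) (hxy : x ≤ y) :
    α * ((y - x) - Real.log (y / x)) ≤ (Lf α y - y) - (Lf α x - x) := by
  have hd : ∀ z : ℝ, 0 < z → HasDerivAt (fun x => (Lf α x - x) - α * (x - Real.log x))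
      (α * Df α z - α * (1 - z⁻¹)) z := fun z hz =>
    (Lf_deriv α z hz).sub (((hasDerivAt_id z).sub (Real.hasDerivAt_log hz.ne')).const_mul α)
  have : MonotoneOn (fun x => (Lf α x - x) - α * (x - Real.log x)) (Set.Ici 1) := by
    apply monotoneOn_of_deriv_nonneg (convex_Ici 1)
    · intro z hz
      exact (hd z (lt_of_lt_of_le one_pos hz)).continuousAt.continuousWithinAt
    · intro z hz
      rw [interior_Ici] at hz
      exact (hd z (lt_trans one_pos hz)).differentiableAt.differentiableWithinAt
    · intro z hz
      rw [interior_Ici] at hz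
      have hz0 : 0 < z := lt_trans one_pos hz
      rw [(hd z hz0).deriv]
      have := mul_le_mul_of_nonneg_left (Df_ge α hα z hz0) hα.le
      linarith
  have h := this (Set.mem_Ici.2 hx) (Set.mem_Ici.2 (hx.trans hxy)) hxy
  simp only at h
  rw [Real.log_div (by linarith) (by linarith)]
  linarith

lemma log_trap (x : ℝ) (hx : 1 ≤ x) : Real.log x ≤ (x - x⁻¹) / 2 := by
  have := Real.self_le_sinh_iff.2 (Real.log_nonneg hx)
  rwa [Real.sinh_log (by linarith)] at this

lemma trap (ε a : ℝ) (hε : 0 < ε) (hε2 : ε ≤ 1 / 2) (ha : 0 ≤ a) :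
    3 * ε / 4 * (a ^ 2 / (1 + a)) ≤
      ((1 + a) - (1 + (1 - ε) * a)) - Real.log ((1 + a) / (1 + (1 - ε) * a)) := by
  have hb : a / 2 ≤ (1 - ε) * a := by nlinarith
  have hb2 : (1 - ε) * a ≤ a := by nlinarith
  have h1 : 0 < 1 + (1 - ε) * a := by linarith
  have h2 : 0 < 1 + a := by linarith
  have h := log_trap ((1 + a) / (1 + (1 - ε) * a)) (by rw [le_div_iff₀ h1]; linarith)
  have e : ((1 + a) / (1 + (1 - ε) * a) - ((1 + a) / (1 + (1 - ε) * a))⁻¹) / 2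
      = ε * a / 2 * (1 / (1 + a) + 1 / (1 + (1 - ε) * a)) := by
    have h1' := h1.ne'
    have h2' := h2.ne'
    obtain ⟨b, hb'⟩ : ∃ b, b = 1 + (1 - ε) * a := ⟨_, rfl⟩
    have hεa : ε * a = 1 + a - b := by rw [hb']; ring
    rw [hεa]
    rw [← hb'] at h1' ⊢
    field_simp
    ring
  have h3 : 1 / (1 + (1 - ε) * a) ≤ 1 / (1 + a / 2) :=
    one_div_le_one_div_of_le (by linarith) (by linarith)
  have h4 : 1 / (1 + a / 2) ≤ 1 - a / (2 * (1 + a)) := by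
    rw [div_le_iff₀ (by linarith)]
    have : (1 - a / (2 * (1 + a))) * (1 + a / 2) = 1 + a ^ 2 / (4 * (1 + a)) := by
      field_simp
      ring
    rw [this]
    have : 0 ≤ a ^ 2 / (4 * (1 + a)) := by positivity
    linarith
  have h5 := mul_le_mul_of_nonneg_left (h3.trans h4) (by positivity : 0 ≤ ε * a / 2)
  have e2 : ε * a / 2 * (1 / (1 + a)) + ε * a / 2 * (1 - a / (2 * (1 + a)))
      = ε * a - 3 * ε / 4 * (a ^ 2 / (1 + a)) := by
    field_simp
    ring
  rw [e] at h
  linarith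

lemma pointwise (α : ℝ) (hα : 0 < α) (ε : ℝ) (hε : 0 < ε) (hε2 : ε ≤ 1 / 2)
    (y : ℝ) (hy : 0 ≤ y) (t : ℝ) :
    α * (3 * ε / 4) * (2 * t * max (y - 1) 0 - t ^ 2 * (1 + max (y - 1) 0)) ≤
      Lf α y - Lf α ((1 - ε) * y + ε) - ε * (y - 1) := by
  rcases le_total y 1 with h | h
  · rw [max_eq_right (by linarith)]
    have h1 := low α hα y ((1 - ε) * y + ε) hy (by nlinarith) (by nlinarith)
    have : 0 ≤ α * (3 * ε / 4) * t ^ 2 := by positivity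
    linarith
  · rw [max_eq_left (by linarith)]
    obtain ⟨a, rfl⟩ : ∃ a, y = 1 + a := ⟨y - 1, by ring⟩
    have ha : 0 ≤ a := by linarith
    have hb2 : (1 - ε) * a ≤ a := by nlinarith
    have hb : 0 ≤ (1 - ε) * a := by nlinarith
    have h1 := high α hα (1 + (1 - ε) * a) (1 + a) (by linarith) (by linarith)
    have h2 := mul_le_mul_of_nonneg_left (trap ε a hε hε2 ha) hα.le
    have h3 : 2 * t * a - t ^ 2 * (1 + a) ≤ a ^ 2 / (1 + a) := by
      rw [le_div_iff₀ (by linarith)]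
      nlinarith [sq_nonneg (a - t * (1 + a))]
    have h4 := mul_le_mul_of_nonneg_left h3 (by positivity : 0 ≤ α * (3 * ε / 4))
    rw [show (1 - ε) * (1 + a) + ε = 1 + (1 - ε) * a by ring,
      show 1 + a - 1 = a by ring]
    linarith

lemma tsallis_eq (α : ℝ) {d : ℕ} (p : Fin d → ℝ) (hp : ∑ i, p i = 1) :
    tsallisEntropy α p = -∑ i, Lf α (p i) := by
  unfold tsallisEntropy shannonEntropy Lf
  split_ifs with h
  · rfl
  · rw [← Finset.sum_div, Finset.sum_sub_distrib, hp]
    ring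

lemma Lf_scale (α : ℝ) (c : ℝ) (hc : 0 < c) :
    ∃ k, ∀ y, 0 ≤ y → Lf α (c * y) = c ^ α * Lf α y + k * y := by
  unfold Lf
  by_cases h : α = 1
  · refine ⟨c * Real.log c, fun y hy => ?_⟩
    simp only [h, if_true, Real.rpow_one]
    rcases hy.eq_or_lt with rfl | hy
    · simp
    · rw [Real.log_mul hc.ne' hy.ne']
      ring
  · refine ⟨(c ^ α - c) / (α - 1), fun y hy => ?_⟩
    simp only [h, if_false]
    rw [Real.mul_rpow hc.le hy]
    ring

lemma main_gap (d : ℕ) (hd : 2 ≤ d) (q : Fin d → ℝ) (hq : IsProbVec q)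
    (α : ℝ) (hα : 0 < α) (ε : ℝ) (hε : 0 < ε) (hε2 : ε ≤ 1 / 2)
    (hdist : ε ≤ l1Dist q (unif d)) :
    tsallisEntropy α q + ((d : ℝ)⁻¹) ^ α * (α * d * ε ^ 3 / 8) ≤
      tsallisEntropy α (fun i => (1 - ε) * q i + ε * (1 / d)) := by
  have hd0 : (0 : ℝ) < d := by exact_mod_cast (by omega : 0 < d)
  obtain ⟨hq0, hq1⟩ := hq
  have hs : ∑ i, ((1 - ε) * q i + ε * (1 / d)) = 1 := by
    rw [Finset.sum_add_distrib, ← Finset.mul_sum, hq1]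
    simp
    field_simp
    ring
  rw [tsallis_eq α q hq1, tsallis_eq α _ hs]
  obtain ⟨k, hk⟩ := Lf_scale α ((d : ℝ)⁻¹) (inv_pos.2 hd0)
  have hy : ∑ i, (d * q i - 1) = 0 := by
    rw [Finset.sum_sub_distrib, ← Finset.mul_sum, hq1]
    simp
  have hM : d * ε / 2 ≤ ∑ i, max (d * q i - 1) 0 := by
    have e : ∀ i, d * |q i - unif d i| = 2 * max (d * q i - 1) 0 - (d * q i - 1) := by
      intro i
      have : (d : ℝ) * |q i - unif d i| = |d * q i - 1| := by
        rw [← abs_of_pos hd0, ← abs_mul, abs_of_pos hd0]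
        congr 1
        unfold unif
        field_simp
      rw [this]
      rcases le_total 0 (d * q i - 1) with h | h
      · rw [abs_of_nonneg h, max_eq_left h]; ring
      · rw [abs_of_nonpos h, max_eq_right h]; ring
    have h1 : d * l1Dist q (unif d) = 2 * ∑ i, max (d * q i - 1) 0 := by
      unfold l1Dist
      rw [Finset.mul_sum, Finset.sum_congr rfl (fun i _ => e i), Finset.sum_sub_distrib, hy,
        ← Finset.mul_sum, sub_zero]
    have := mul_le_mul_of_nonneg_left hdist hd0.le
    linarith
  have hpt : ∀ i, ((d : ℝ)⁻¹) ^ α * (α * (3 * ε / 4) * (2 * (2 * ε / 5) * max (d * q i - 1) 0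
      - (2 * ε / 5) ^ 2 * (1 + max (d * q i - 1) 0)))
      + (((d : ℝ)⁻¹) ^ α + k) * ε * (d * q i - 1) ≤
      Lf α (q i) - Lf α ((1 - ε) * q i + ε * (1 / d)) := by
    intro i
    have hyi : 0 ≤ d * q i := mul_nonneg hd0.le (hq0 i)
    have h := mul_le_mul_of_nonneg_left (pointwise α hα ε hε hε2 (d * q i) hyi (2 * ε / 5))
      (by positivity : 0 ≤ ((d : ℝ)⁻¹) ^ α)
    have h1 := hk (d * q i) hyi
    have h2 := hk ((1 - ε) * (d * q i) + ε) (by nlinarith)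
    rw [show (d : ℝ)⁻¹ * (d * q i) = q i by field_simp] at h1
    rw [show (d : ℝ)⁻¹ * ((1 - ε) * (d * q i) + ε) = (1 - ε) * q i + ε * (1 / d) by
      field_simp] at h2
    rw [h1, h2]
    linarith
  have hsum := Finset.sum_le_sum (fun i (_ : i ∈ Finset.univ) => hpt i)
  rw [Finset.sum_add_distrib, ← Finset.mul_sum, ← Finset.mul_sum, ← Finset.mul_sum, hy,
    Finset.sum_sub_distrib, Finset.sum_sub_distrib, ← Finset.mul_sum, ← Finset.mul_sum,
    Finset.sum_add_distrib] at hsum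
  simp only [Finset.sum_const, Finset.card_univ, Fintype.card_fin, nsmul_eq_mul, mul_one,
    mul_zero, add_zero] at hsum
  set M := ∑ i, max (d * q i - 1) 0
  have hfin : α * d * ε ^ 3 / 8 ≤
      α * (3 * ε / 4) * (2 * (2 * ε / 5) * M - (2 * ε / 5) ^ 2 * (d + M)) := by
    have h1 : d * ε ^ 2 / 5 ≤ 2 * (2 * ε / 5) * M - (2 * ε / 5) ^ 2 * (d + M) := by
      have hc : 0 ≤ 2 * (2 * ε / 5) - (2 * ε / 5) ^ 2 := by nlinarith
      have h2 := mul_le_mul_of_nonneg_left hM hc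
      have h3 : 0 ≤ d * ε ^ 2 * (1 / 2 - ε) := by
        have : 0 ≤ 1 / 2 - ε := by linarith
        positivity
      linarith
    have h2 := mul_le_mul_of_nonneg_left h1 (by positivity : 0 ≤ α * (3 * ε / 4))
    have h3 : 0 ≤ α * d * ε ^ 3 := by positivity
    linarith
  have := mul_le_mul_of_nonneg_left hfin (by positivity : 0 ≤ ((d : ℝ)⁻¹) ^ α)
  linarith

/-- From approximate to strict Tsallis-entropy inequalities: if `T_α(p) ≤ T_α(q) + η_α` then
`T_α(p) ≤ T_α(q̃(ε_T(α))) − min{η_α, T_α(u_d) − T_α(p)}`, where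
`ε_T(α) = (16 η_α d^{α−1})^{1/3}` for `α ≥ 1` and `(16 η_α d^{α−1} α^{−1})^{1/3}` for
`0 < α < 1`, assuming `ε_T(α) ≤ 1/2`. -/
theorem approx_to_strict_tsallis (d : ℕ) (hd : 2 ≤ d)
    (p q : Fin d → ℝ) (hp : IsProbVec p) (hq : IsProbVec q)
    (α : ℝ) (hα : 0 < α) (ηα : ℝ) (hηα : 0 < ηα)
    (hT : tsallisEntropy α p ≤ tsallisEntropy α q + ηα)
    (εT : ℝ)
    (hεT : εT = if 1 ≤ α then (16 * ηα * (d : ℝ) ^ (α - 1)) ^ ((1 : ℝ) / 3)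
      else (16 * ηα * (d : ℝ) ^ (α - 1) * α⁻¹) ^ ((1 : ℝ) / 3))
    (hεT12 : εT ≤ 1 / 2) :
    tsallisEntropy α p ≤ tsallisEntropy α (smoothed q εT) -
      min ηα (tsallisEntropy α (unif d) - tsallisEntropy α p) := by
  have hd0 : (0 : ℝ) < d := by exact_mod_cast (by omega : 0 < d)
  have hε : 0 < εT := by
    rw [hεT]; split_ifs <;> positivity
  unfold smoothed
  split_ifs with h
  · have := min_le_right ηα (tsallisEntropy α (unif d) - tsallisEntropy α p)
    linarith
  · have hg := main_gap d hd q hq α hα εT hε hεT12 (not_lt.1 h)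
    have hcube : ∀ x : ℝ, 0 ≤ x → (x ^ ((1 : ℝ) / 3)) ^ 3 = x := by
      intro x hx
      rw [← Real.rpow_natCast, ← Real.rpow_mul hx]
      norm_num
    have hA : ((d : ℝ)⁻¹) ^ α * d * (d : ℝ) ^ (α - 1) = 1 := by
      rw [Real.inv_rpow hd0.le, Real.rpow_sub_one hd0.ne']
      have : (d : ℝ) ^ α ≠ 0 := by positivity
      field_simp
    have h2 : 2 * ηα ≤ ((d : ℝ)⁻¹) ^ α * (α * d * εT ^ 3 / 8) := by
      split_ifs at hεT with h1
      · rw [hεT, hcube _ (by positivity)]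
        have : ((d : ℝ)⁻¹) ^ α * (α * d * (16 * ηα * (d : ℝ) ^ (α - 1)) / 8)
          = 2 * ηα * α * (((d : ℝ)⁻¹) ^ α * d * (d : ℝ) ^ (α - 1)) := by ring
        rw [this, hA]
        nlinarith
      · rw [hεT, hcube _ (by positivity)]
        have : ((d : ℝ)⁻¹) ^ α * (α * d * (16 * ηα * (d : ℝ) ^ (α - 1) * α⁻¹) / 8)
          = 2 * ηα * (α * α⁻¹) * (((d : ℝ)⁻¹) ^ α * d * (d : ℝ) ^ (α - 1)) := by ring
        rw [this, hA, mul_inv_cancel₀ hα.ne']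
        linarith
    have := min_le_left ηα (tsallisEntropy α (unif d) - tsallisEntropy α p)
    linarith
end

section
/- Strict Rényi-entropy gap for non-full-rank distributions (Proposition, part (iii)): Let d ≥ 2, let α ∈ (0,1), let p ∈ ℝ^d be a probability vector that is not of full rank (some entry p_i = 0), and let q ∈ ℝ^d be an arbitrary probability vector. Set ε₀ := ((d−1)/d)^{1/(2α)} and assume ε₀ ≤ 1/2. Then S_α(p) ≤ S_α(q̃(ε₀)) − (1/2)·ln( d/(d−1) ). -/
lemma sum_rpow_zero_entry (d : ℕ) (hd : 2 ≤ d) (α : ℝ) (hα0 : 0 < α) (hα1 : α < 1)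
    (p : Fin d → ℝ) (hp : IsProbVec p) (hrank : ∃ i, p i = 0) :
    ∑ i, p i ^ α ≤ ((d : ℝ) - 1) ^ (1 - α) := by
  obtain ⟨j, hj⟩ := hrank
  have hd' : (2 : ℝ) ≤ d := by exact_mod_cast hd
  have hpos : (0 : ℝ) < (d : ℝ) - 1 := by linarith
  have hcard : (((Finset.univ.erase j : Finset (Fin d)).card : ℕ) : ℝ) = (d : ℝ) - 1 := by
    rw [Finset.card_erase_of_mem (Finset.mem_univ j), Finset.card_univ, Fintype.card_fin,
      Nat.cast_sub (by omega)]
    simp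
  have h := (Real.concaveOn_rpow hα0.le hα1.le).le_map_sum
    (t := (Finset.univ.erase j : Finset (Fin d))) (w := fun _ => ((d : ℝ) - 1)⁻¹) (p := p)
    (fun i _ => by positivity)
    (by rw [Finset.sum_const, nsmul_eq_mul, hcard]; exact mul_inv_cancel₀ hpos.ne')
    (fun i _ => hp.1 i)
  simp only [smul_eq_mul] at h
  rw [← Finset.mul_sum, ← Finset.mul_sum] at h
  have h1 : ∑ i ∈ Finset.univ.erase j, p i = 1 := by
    rw [Finset.sum_erase _ hj]; exact hp.2
  have h2 : ∑ i ∈ Finset.univ.erase j, p i ^ α = ∑ i, p i ^ α := by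
    apply Finset.sum_erase
    rw [hj, Real.zero_rpow hα0.ne']
  rw [h1, h2, mul_one, Real.inv_rpow hpos.le, inv_mul_le_iff₀ hpos] at h
  rwa [Real.rpow_sub hpos, Real.rpow_one, div_eq_mul_inv]

lemma smoothed_lower (d : ℕ) (hd : 2 ≤ d) (α : ℝ) (hα0 : 0 < α) (hα1 : α < 1)
    (q : Fin d → ℝ) (hq : IsProbVec q)
    (ε : ℝ) (hε0 : 0 ≤ ε) (hε12 : ε ≤ 1 / 2) :
    ((d : ℝ) - 1) * (ε / d) ^ α + (((d : ℝ) + 1) / 2 / d) ^ α ≤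
      ∑ i, ((1 - ε) * q i + ε * (1 / d)) ^ α := by
  have hd' : (2 : ℝ) ≤ d := by exact_mod_cast hd
  have hdpos : (0 : ℝ) < d := by linarith
  have hle : (((d : ℝ) + 1) / 2 / d) ^ α ≤ (1 - ε + ε / d) ^ α := by
    apply Real.rpow_le_rpow (by positivity) _ hα0.le
    have : 1 - ε + ε / d = (d - ε * (d - 1)) / d := by field_simp; ring
    rw [this]
    gcongr
    nlinarith
  have hq1 : ∀ i, q i ≤ 1 := fun i => by
    rw [← hq.2]
    exact Finset.single_le_sum (fun k _ => hq.1 k) (Finset.mem_univ i)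
  have key : ∀ i, (1 - q i) * (ε / d) ^ α + q i * (1 - ε + ε / d) ^ α ≤
      ((1 - ε) * q i + ε * (1 / d)) ^ α := by
    intro i
    have hx : ε / (d : ℝ) ∈ Set.Ici (0 : ℝ) := by
      show 0 ≤ ε / (d : ℝ)
      positivity
    have hy : 1 - ε + ε / (d : ℝ) ∈ Set.Ici (0 : ℝ) := by
      have : 0 ≤ ε / (d : ℝ) := by positivity
      show 0 ≤ 1 - ε + ε / (d : ℝ)
      linarith
    have ha : 0 ≤ 1 - q i := by linarith [hq1 i]
    have h := (Real.concaveOn_rpow hα0.le hα1.le).2 hx hy ha (hq.1 i) (by ring)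
    simp only [smul_eq_mul] at h
    refine h.trans_eq ?_
    congr 1
    ring
  have hs := Finset.sum_le_sum (fun i (_ : i ∈ Finset.univ) => key i)
  rw [Finset.sum_add_distrib, ← Finset.sum_mul, ← Finset.sum_mul, Finset.sum_sub_distrib,
    hq.2] at hs
  simp only [Finset.sum_const, Finset.card_univ, Fintype.card_fin, nsmul_eq_mul, mul_one,
    one_mul] at hs
  linarith

lemma scalar_bound (d : ℝ) (hd : 2 ≤ d) (α : ℝ) (hα0 : 0 < α) (hα1 : α < 1)
    (ε : ℝ) (hε : ε = ((d - 1) / d) ^ (1 / (2 * α))) (hε12 : ε ≤ 1 / 2) :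
    d ^ (1 - α) * ((d - 1) / d) ^ ((1 - α) / 2) ≤
      (d - 1) * (ε / d) ^ α + ((d + 1) / 2 / d) ^ α := by
  have hdpos : 0 < d := by linarith
  have hd1 : 0 < d - 1 := by linarith
  have hr : 0 < (d - 1) / d := by positivity
  have hε0 : 0 ≤ ε := by rw [hε]; positivity
  set r := (d - 1) / d with hrdef
  set s := r ^ (1 / 2 : ℝ) with hs
  have hspos : 0 < s := by positivity
  have hεs : ε ^ α = s := by
    rw [hε, ← Real.rpow_mul hr.le, hs]
    congr 1
    field_simp
  have hs2 : s ≤ (1 / 2) ^ α := by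
    rw [← hεs]; exact Real.rpow_le_rpow hε0 hε12 hα0.le
  have h3 : 1 + α ≤ (d + 1) ^ α := by
    rw [Real.rpow_def_of_pos (by linarith)]
    have h1 : 1 ≤ Real.log (d + 1) := by
      rw [Real.le_log_iff_exp_le (by linarith)]
      linarith [Real.exp_one_lt_d9]
    have := Real.add_one_le_exp (Real.log (d + 1) * α)
    nlinarith
  have h4 : s * (1 + α) ≤ ((d + 1) / 2) ^ α := by
    rw [div_eq_mul_one_div, Real.mul_rpow (by linarith) (by norm_num), mul_comm s]
    exact mul_le_mul h3 hs2 hspos.le (by positivity)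
  have h5 : r ^ (-(α / 2)) ≤ 1 + α / d := by
    rw [Real.rpow_neg hr.le, ← Real.inv_rpow hr.le]
    have e : r⁻¹ = 1 + 1 / (d - 1) := by rw [hrdef]; field_simp; ring
    have hb := rpow_one_add_le_one_add_mul_self (s := 1 / (d - 1)) (p := α / 2)
      (by have : 0 ≤ 1 / (d - 1) := by positivity
          linarith) (by linarith) (by linarith)
    rw [e]
    refine hb.trans ?_
    have : α / 2 * (1 / (d - 1)) = α / (2 * (d - 1)) := by field_simp
    rw [this]
    gcongr
    linarith
  have h6 : r ^ ((1 - α) / 2) = s * r ^ (-(α / 2)) := by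
    rw [hs, ← Real.rpow_add hr]; congr 1; ring
  have hda : 0 < d ^ α := by positivity
  rw [h6, Real.div_rpow hε0 hdpos.le, Real.div_rpow (x := (d + 1) / 2) (by positivity) hdpos.le, hεs,
    Real.rpow_sub hdpos, Real.rpow_one]
  have h7 : d * (s * r ^ (-(α / 2))) ≤ (d - 1) * s + ((d + 1) / 2) ^ α := by
    have : d * (s * r ^ (-(α / 2))) ≤ d * (s * (1 + α / d)) := by gcongr
    have e : d * (s * (1 + α / d)) = d * s + s * α := by field_simp
    nlinarith
  calc _ = d * (s * r ^ (-(α / 2))) / d ^ α := by ring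
    _ ≤ ((d - 1) * s + ((d + 1) / 2) ^ α) / d ^ α := by gcongr
    _ = _ := by ring

/-- Strict Rényi-entropy gap for non-full-rank distributions: for `α ∈ (0,1)`, a probability
vector `p` with a zero entry, and any probability vector `q`, with
`ε₀ = ((d−1)/d)^{1/(2α)} ≤ 1/2` one has `S_α(p) ≤ S_α(q̃(ε₀)) − (1/2)ln(d/(d−1))`. -/
theorem strict_renyi_gap_not_full_rank (d : ℕ) (hd : 2 ≤ d)
    (α : ℝ) (hα0 : 0 < α) (hα1 : α < 1)
    (p q : Fin d → ℝ) (hp : IsProbVec p) (hq : IsProbVec q)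
    (hrank : ∃ i, p i = 0)
    (ε₀ : ℝ) (hε₀ : ε₀ = (((d : ℝ) - 1) / d) ^ (1 / (2 * α))) (hε12 : ε₀ ≤ 1 / 2) :
    renyiEntropy α p ≤ renyiEntropy α (smoothed q ε₀) -
      (1 / 2) * Real.log ((d : ℝ) / ((d : ℝ) - 1)) := by
  have hd' : (2 : ℝ) ≤ d := by exact_mod_cast hd
  have hdpos : (0 : ℝ) < d := by linarith
  have hd1 : (0 : ℝ) < (d : ℝ) - 1 := by linarith
  have h1α : 0 < 1 - α := by linarith
  have hr : 0 < ((d : ℝ) - 1) / d := by positivity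
  have hε0 : 0 ≤ ε₀ := by rw [hε₀]; positivity
  have hP := sum_rpow_zero_entry d hd α hα0 hα1 p hp hrank
  have hQ : (d : ℝ) ^ (1 - α) * (((d : ℝ) - 1) / d) ^ ((1 - α) / 2) ≤
      ∑ i, smoothed q ε₀ i ^ α := by
    unfold smoothed
    split_ifs with h
    · have hle : (((d : ℝ) - 1) / d) ^ ((1 - α) / 2) ≤ 1 := by
        apply Real.rpow_le_one hr.le _ (by linarith)
        rw [div_le_one hdpos]; linarith
      have e : ∑ i, unif d i ^ α = (d : ℝ) ^ (1 - α) := by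
        simp only [unif, Finset.sum_const, Finset.card_univ, Fintype.card_fin, nsmul_eq_mul]
        rw [one_div, Real.inv_rpow hdpos.le, Real.rpow_sub hdpos, Real.rpow_one, div_eq_mul_inv]
      rw [e]
      exact mul_le_of_le_one_right (by positivity) hle
    · exact (scalar_bound d hd' α hα0 hα1 ε₀ hε₀ hε12).trans
        (smoothed_lower d hd α hα0 hα1 q hq ε₀ hε0 hε12)
  have hlogP : Real.log (∑ i, p i ^ α) ≤ (1 - α) * Real.log ((d : ℝ) - 1) := by
    have h0 : 0 ≤ ∑ i, p i ^ α := Finset.sum_nonneg fun i _ => Real.rpow_nonneg (hp.1 i) _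
    rcases h0.eq_or_lt with h | h
    · rw [← h, Real.log_zero]
      exact mul_nonneg h1α.le (Real.log_nonneg (by linarith))
    · rw [← Real.log_rpow hd1]
      exact Real.log_le_log h hP
  have hlogQ : (1 - α) * (Real.log d + (1 / 2) * (Real.log ((d : ℝ) - 1) - Real.log d)) ≤
      Real.log (∑ i, smoothed q ε₀ i ^ α) := by
    refine le_trans (le_of_eq ?_) (Real.log_le_log (by positivity) hQ)
    rw [Real.log_mul (by positivity) (by positivity), Real.log_rpow hdpos, Real.log_rpow hr,
      Real.log_div hd1.ne' hdpos.ne']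
    ring
  unfold renyiEntropy
  have hP' : (1 - α)⁻¹ * Real.log (∑ i, p i ^ α) ≤ Real.log ((d : ℝ) - 1) := by
    rwa [inv_mul_le_iff₀ h1α]
  have hQ' : Real.log d + (1 / 2) * (Real.log ((d : ℝ) - 1) - Real.log d) ≤
      (1 - α)⁻¹ * Real.log (∑ i, smoothed q ε₀ i ^ α) := by
    rwa [le_inv_mul_iff₀ h1α]
  rw [Real.log_div hdpos.ne' hd1.ne']
  linarith
end

section
/- Uniform continuity of the Tsallis entropy away from α = 1 (Theorem, part 0): Let d ≥ 1 and let p, p' ∈ ℝ^d be probability vectors. Then for every α ∈ (0,1) ∪ (1,∞), |T_α(p) − T_α(p')| ≤ (2·⌈α⌉/|α−1|) · d^{1 − α/⌈α⌉} · (‖p − p'‖₁)^{α/⌈α⌉}, where ⌈α⌉ is the least integer that is ≥ α. -/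
lemma tc_rpow_sub {x y b : ℝ} (hx : 0 ≤ x) (hy : 0 ≤ y) (hb : 0 ≤ b) (hb1 : b ≤ 1) :
    |x ^ b - y ^ b| ≤ |x - y| ^ b := by
  wlog h : y ≤ x generalizing x y
  · rw [abs_sub_comm, abs_sub_comm x y]
    exact this hy hx (le_of_not_ge h)
  rw [abs_of_nonneg (sub_nonneg.2 h),
    abs_of_nonneg (sub_nonneg.2 (Real.rpow_le_rpow hy h hb))]
  have := Real.rpow_add_le_add_rpow hy (sub_nonneg.2 h) hb hb1
  rw [add_sub_cancel] at this
  linarith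

lemma tc_term {x y α : ℝ} (hx : 0 ≤ x) (hy : 0 ≤ y) (hx1 : x ≤ 1) (hy1 : y ≤ 1) (hα : 0 < α) :
    |x ^ α - y ^ α| ≤ (⌈α⌉₊ : ℝ) * |x - y| ^ (α / (⌈α⌉₊ : ℝ)) := by
  have hn : (0 : ℝ) < (⌈α⌉₊ : ℝ) := by exact_mod_cast Nat.ceil_pos.2 hα
  have hb : 0 ≤ α / (⌈α⌉₊ : ℝ) := by positivity
  have hb1 : α / (⌈α⌉₊ : ℝ) ≤ 1 := (div_le_one hn).2 (Nat.le_ceil α)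
  have key : ∀ z : ℝ, 0 ≤ z → z ^ α = (z ^ (α / (⌈α⌉₊ : ℝ))) ^ ⌈α⌉₊ := by
    intro z hz
    rw [← Real.rpow_mul_natCast hz, div_mul_cancel₀ _ hn.ne']
  rw [key x hx, key y hy]
  have h1 := Real.rpow_le_one hx hx1 hb
  have h2 := Real.rpow_le_one hy hy1 hb
  have h3 := Real.rpow_nonneg hx (α / (⌈α⌉₊ : ℝ))
  have h4 := Real.rpow_nonneg hy (α / (⌈α⌉₊ : ℝ))
  refine (abs_pow_sub_pow_le _ _ _).trans ?_
  rw [abs_of_nonneg h3, abs_of_nonneg h4, mul_comm (|_|) (_ : ℝ)]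
  have h5 : max (x ^ (α / (⌈α⌉₊ : ℝ))) (y ^ (α / (⌈α⌉₊ : ℝ))) ^ (⌈α⌉₊ - 1) ≤ 1 :=
    pow_le_one₀ (le_max_of_le_left h3) (max_le h1 h2)
  refine (mul_le_of_le_one_right (by positivity) h5).trans ?_
  exact mul_le_mul_of_nonneg_left (tc_rpow_sub hx hy hb hb1) hn.le

lemma tc_jensen {d : ℕ} (hd : 1 ≤ d) (f : Fin d → ℝ) (hf : ∀ i, 0 ≤ f i) {b : ℝ}
    (hb : 0 ≤ b) (hb1 : b ≤ 1) :
    ∑ i, f i ^ b ≤ (d : ℝ) ^ (1 - b) * (∑ i, f i) ^ b := by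
  have hd0 : (0 : ℝ) < d := by exact_mod_cast hd
  have h := (Real.concaveOn_rpow hb hb1).le_map_sum (t := Finset.univ)
    (w := fun _ : Fin d => (d : ℝ)⁻¹) (p := f) (fun _ _ => by positivity)
    (by simp [hd0.ne']) (fun i _ => hf i)
  simp only [smul_eq_mul, ← Finset.mul_sum] at h
  have hS : 0 ≤ ∑ i, f i := Finset.sum_nonneg fun i _ => hf i
  rw [Real.mul_rpow (by positivity) hS, Real.inv_rpow hd0.le] at h
  rw [Real.rpow_sub hd0, Real.rpow_one]
  calc ∑ i, f i ^ b = d * ((d : ℝ)⁻¹ * ∑ i, f i ^ b) := by field_simp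
    _ ≤ d * (((d : ℝ) ^ b)⁻¹ * (∑ i, f i) ^ b) := mul_le_mul_of_nonneg_left h hd0.le
    _ = _ := by ring

/-- Uniform continuity of the Tsallis entropy away from `α = 1`:
`|T_α(p) − T_α(p')| ≤ (2⌈α⌉/|α−1|) d^{1−α/⌈α⌉} ‖p−p'‖₁^{α/⌈α⌉}`. -/
theorem tsallis_continuity (d : ℕ) (hd : 1 ≤ d)
    (p p' : Fin d → ℝ) (hp : IsProbVec p) (hp' : IsProbVec p')
    (α : ℝ) (hα : 0 < α) (hα1 : α ≠ 1) :
    |tsallisEntropy α p - tsallisEntropy α p'| ≤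
      (2 * (⌈α⌉₊ : ℝ) / |α - 1|) * (d : ℝ) ^ (1 - α / (⌈α⌉₊ : ℝ)) *
        (l1Dist p p') ^ (α / (⌈α⌉₊ : ℝ)) := by
  have hn : (0 : ℝ) < (⌈α⌉₊ : ℝ) := by exact_mod_cast Nat.ceil_pos.2 hα
  have hb : 0 ≤ α / (⌈α⌉₊ : ℝ) := by positivity
  have hb1 : α / (⌈α⌉₊ : ℝ) ≤ 1 := (div_le_one hn).2 (Nat.le_ceil α)
  have le1 : ∀ q : Fin d → ℝ, IsProbVec q → ∀ i, q i ≤ 1 := fun q hq i =>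
    hq.2 ▸ Finset.single_le_sum (fun j _ => hq.1 j) (Finset.mem_univ i)
  have ha : 0 < |α - 1| := abs_pos.2 (sub_ne_zero.2 hα1)
  have hJ := tc_jensen hd (fun i => |p i - p' i|) (fun i => abs_nonneg _) hb hb1
  have hsum : |∑ i, p' i ^ α - ∑ i, p i ^ α| ≤
      (⌈α⌉₊ : ℝ) * ∑ i, |p i - p' i| ^ (α / (⌈α⌉₊ : ℝ)) := by
    rw [abs_sub_comm, ← Finset.sum_sub_distrib, Finset.mul_sum]
    exact (Finset.abs_sum_le_sum_abs _ _).trans (Finset.sum_le_sum fun i _ =>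
      tc_term (hp.1 i) (hp'.1 i) (le1 p hp i) (le1 p' hp' i) hα)
  have hS : 0 ≤ ∑ i, |p i - p' i| := Finset.sum_nonneg fun i _ => abs_nonneg _
  unfold tsallisEntropy l1Dist
  rw [if_neg hα1, if_neg hα1, ← sub_div, abs_div, sub_sub_sub_cancel_left, div_le_iff₀ ha]
  have hR : 0 ≤ (d : ℝ) ^ (1 - α / (⌈α⌉₊ : ℝ)) *
      (∑ i, |p i - p' i|) ^ (α / (⌈α⌉₊ : ℝ)) := by positivity
  have h2 := mul_le_mul_of_nonneg_left hJ hn.le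
  have h3 := mul_nonneg hn.le hR
  have e : 2 * (⌈α⌉₊ : ℝ) / |α - 1| * (d : ℝ) ^ (1 - α / (⌈α⌉₊ : ℝ)) *
      (∑ i, |p i - p' i|) ^ (α / (⌈α⌉₊ : ℝ)) * |α - 1| =
      2 * ((⌈α⌉₊ : ℝ) * ((d : ℝ) ^ (1 - α / (⌈α⌉₊ : ℝ)) *
      (∑ i, |p i - p' i|) ^ (α / (⌈α⌉₊ : ℝ)))) := by
    field_simp
  rw [e]
  linarith
end

section
/- Hellinger divergence dominates α times the Kullback–Leibler divergence for binary distributions relative to the uniform distribution (Lemma): For every α ∈ [0,1) and every δ ∈ (0,1), ((1+δ)^α + (1−δ)^α − 2)/(α−1) ≥ α·( (1+δ)·ln(1+δ) + (1−δ)·ln(1−δ) ). (Equivalently, for the binary probability vector p = ((1+δ)/2, (1−δ)/2) one has 𝓗_α(p | u_2) ≥ α·D(p | u_2), where 𝓗_α is the Hellinger divergence and D the Kullback–Leibler divergence.) -/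
theorem aux_exp (x y : ℝ) (hy : 0 ≤ y) (hxy : y ≤ x) :
    x + y ≤ Real.exp x - Real.exp (-y) := by
  have h1 : y ≤ Real.sinh y := Real.self_le_sinh_iff.mpr hy
  rw [Real.sinh_eq] at h1
  have h2 : x - y + 1 ≤ Real.exp (x - y) := Real.add_one_le_exp _
  have h3 : Real.exp x = Real.exp y * Real.exp (x - y) := by
    rw [← Real.exp_add]; congr 1; ring
  have h4 : 1 ≤ Real.exp y := Real.one_le_exp hy
  nlinarith [mul_nonneg (sub_nonneg.mpr h4) (sub_nonneg.mpr hxy)]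

theorem aux_deriv (α t : ℝ) (hα0 : 0 ≤ α) (hα1 : α < 1) (h0 : 0 < t) (h1 : t < 1) :
    0 ≤ α * (((1 + t) ^ (α - 1) - (1 - t) ^ (α - 1)) / (α - 1)
      - (Real.log (1 + t) - Real.log (1 - t))) := by
  apply mul_nonneg hα0
  have ha : 0 < 1 + t := by linarith
  have hb : 0 < 1 - t := by linarith
  have hv : 0 ≤ Real.log (1 + t) := Real.log_nonneg (by linarith)
  have huv : Real.log (1 + t) + Real.log (1 - t) ≤ 0 := by
    rw [← Real.log_mul ha.ne' hb.ne']
    exact Real.log_nonpos (by positivity) (by nlinarith)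
  have hβ : 0 < 1 - α := by linarith
  have key := aux_exp ((1 - α) * (-Real.log (1 - t))) ((1 - α) * Real.log (1 + t))
    (by positivity) (mul_le_mul_of_nonneg_left (by linarith) hβ.le)
  rw [Real.rpow_def_of_pos ha, Real.rpow_def_of_pos hb]
  have e1 : (1 - α) * (-Real.log (1 - t)) = Real.log (1 - t) * (α - 1) := by ring
  have e2 : -((1 - α) * Real.log (1 + t)) = Real.log (1 + t) * (α - 1) := by ring
  rw [e2] at key
  rw [sub_nonneg, le_div_iff_of_neg (by linarith)]
  rw [e1] at key
  linarith

theorem aux_hasDeriv (α t : ℝ) (hα1 : α < 1) (h0 : 0 ≤ t) (h1 : t < 1) :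
    HasDerivAt (fun t : ℝ => ((1 + t) ^ α + (1 - t) ^ α - 2) / (α - 1)
      - α * ((1 + t) * Real.log (1 + t) + (1 - t) * Real.log (1 - t)))
      (α * (((1 + t) ^ (α - 1) - (1 - t) ^ (α - 1)) / (α - 1)
      - (Real.log (1 + t) - Real.log (1 - t)))) t := by
  have ha : 1 + t ≠ 0 := by linarith
  have hb : 1 - t ≠ 0 := by linarith
  have d1 : HasDerivAt (fun t : ℝ => 1 + t) 1 t := (hasDerivAt_id t).const_add 1
  have d2 : HasDerivAt (fun t : ℝ => 1 - t) (-1) t := (hasDerivAt_id t).const_sub 1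
  have p1 := d1.rpow_const (p := α) (Or.inl ha)
  have p2 := d2.rpow_const (p := α) (Or.inl hb)
  have l1 := d1.mul (d1.log ha)
  have l2 := d2.mul (d2.log hb)
  have := (((p1.add p2).sub_const 2).div_const (α - 1)).sub ((l1.add l2).const_mul α)
  refine this.congr_deriv ?_
  have hc : α - 1 ≠ 0 := by linarith
  field_simp
  ring

/-- Hellinger divergence dominates `α` times the Kullback–Leibler divergence for binary
distributions relative to the uniform one: for `α ∈ [0,1)` and `δ ∈ (0,1)`,
`((1+δ)^α + (1−δ)^α − 2)/(α−1) ≥ α((1+δ)ln(1+δ) + (1−δ)ln(1−δ))`. -/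
theorem hellinger_ge_alpha_mul_KL (α δ : ℝ) (hα0 : 0 ≤ α) (hα1 : α < 1)
    (hδ0 : 0 < δ) (hδ1 : δ < 1) :
    α * ((1 + δ) * Real.log (1 + δ) + (1 - δ) * Real.log (1 - δ)) ≤
      ((1 + δ) ^ α + (1 - δ) ^ α - 2) / (α - 1) := by
  have hm := monotoneOn_of_deriv_nonneg (convex_Ico (0 : ℝ) 1)
    (f := fun t : ℝ => ((1 + t) ^ α + (1 - t) ^ α - 2) / (α - 1)
      - α * ((1 + t) * Real.log (1 + t) + (1 - t) * Real.log (1 - t)))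
    (fun t ht => (aux_hasDeriv α t hα1 ht.1 ht.2).continuousAt.continuousWithinAt)
    (fun t ht => by
      rw [interior_Ico] at ht
      exact (aux_hasDeriv α t hα1 ht.1.le ht.2).differentiableAt.differentiableWithinAt)
    (fun t ht => by
      rw [interior_Ico] at ht
      rw [(aux_hasDeriv α t hα1 ht.1.le ht.2).deriv]
      exact aux_deriv α t hα0 hα1 ht.1 ht.2)
  have h := hm (⟨le_refl 0, one_pos⟩ : (0 : ℝ) ∈ Set.Ico (0 : ℝ) 1) ⟨hδ0.le, hδ1⟩ hδ0.le
  norm_num at h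
  linarith
end
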